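/- arXiv:2206.09832 — 8 statements merged into one kernel-verified Lean document; each statement's English description precedes it below -/
import Mathlib

section
/- Let N ≥ 3, m > 1, γ ∈ (0,2), T > 0 and a ≥ 0. Set κ := (N−γ)(m−1)/((N−γ)(m−1)+2−γ) and define u : (ℝᴺ \ {0}) × (0,T) → ℝ by u(x,t) = [ a T^κ (T−t)^{−κ} + (κ/(m(2−γ)(N−γ))) |x|^{2−γ} (T−t)^{−1} ]^{1/(m−1)}. Then for every x ∈ ℝᴺ \ {0} and t ∈ (0,T), u is smooth near (x,t) and satisfies |x|^{−γ} ∂u/∂t (x,t) = Δ_x (uᵐ)(x,t), where uᵐ := u^m (u is positive) and Δ_x denotes the Laplacian in the space variable. -/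
open MeasureTheory Metric Filter Set ENNReal

noncomputable section

abbrev Euc (N : ℕ) := EuclideanSpace ℝ (Fin N)

/-- The weight condition: `k (1+|x|)^(-γ) ≤ ρ(x) ≤ K |x|^(-γ)` for a.e. `x`. -/
def WeightCond (N : ℕ) (γ k K : ℝ) (ρ : Euc N → ℝ) : Prop :=
  Measurable ρ ∧
    ∀ᵐ x : Euc N ∂volume, k * (1 + ‖x‖) ^ (-γ) ≤ ρ x ∧ ρ x ≤ K * ‖x‖ ^ (-γ)

/-- Local integrability with respect to the weight `ρ`. -/
def LocInt1 {N : ℕ} (ρ f : Euc N → ℝ) : Prop :=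
  ∀ R : ℝ, 0 < R → IntegrableOn (fun x => |f x| * ρ x) (ball (0 : Euc N) R)

/-- The weighted norm `‖f‖_{1,r}`. -/
def wnorm1 {N : ℕ} (ρ : Euc N → ℝ) (m γ : ℝ) (r : ℝ) (f : Euc N → ℝ) : ℝ :=
  sSup ((fun R : ℝ =>
    R ^ (-((2 - γ) / (m - 1)) - (N : ℝ) + γ) * ∫ x in ball (0 : Euc N) R, |f x| * ρ x) '' Ici r)

/-- Membership in the space `X`. -/
def memX {N : ℕ} (ρ : Euc N → ℝ) (m γ : ℝ) (f : Euc N → ℝ) : Prop :=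
  LocInt1 ρ f ∧
    BddAbove ((fun R : ℝ =>
      R ^ (-((2 - γ) / (m - 1)) - (N : ℝ) + γ) * ∫ x in ball (0 : Euc N) R, |f x| * ρ x) '' Ici 1)

/-- `ℓ(f) = lim_{r→∞} ‖f‖_{1,r}`; since `r ↦ ‖f‖_{1,r}` is nonincreasing and nonnegative,
the limit equals the infimum. -/
def ell {N : ℕ} (ρ : Euc N → ℝ) (m γ : ℝ) (f : Euc N → ℝ) : ℝ :=
  sInf ((fun r : ℝ => wnorm1 ρ m γ r f) '' Ici 1)

/-- The weighted norm `‖f‖_{∞,r}`. -/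
def wnormInf {N : ℕ} (m γ : ℝ) (r : ℝ) (f : Euc N → ℝ) : ℝ :=
  sSup ((fun R : ℝ =>
    R ^ (-((2 - γ) / (m - 1))) *
      (eLpNorm f ⊤ (volume.restrict (ball (0 : Euc N) R))).toReal) '' Ici r)

/-- Membership in the space `X_∞`. -/
def memXinf {N : ℕ} (m γ : ℝ) (f : Euc N → ℝ) : Prop :=
  AEStronglyMeasurable f volume ∧
  (∀ R : ℝ, 0 < R → eLpNorm f ⊤ (volume.restrict (ball (0 : Euc N) R)) < ⊤) ∧
  BddAbove ((fun R : ℝ =>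
    R ^ (-((2 - γ) / (m - 1))) *
      (eLpNorm f ⊤ (volume.restrict (ball (0 : Euc N) R))).toReal) '' Ici 1)

/-- Signed power `u^m := |u|^(m-1) u`. -/
def spow (m s : ℝ) : ℝ := |s| ^ (m - 1) * s

/-- The Laplacian of `φ : ℝᴺ → ℝ`, as a sum of second directional derivatives along the
standard orthonormal basis. -/
def lap {N : ℕ} (φ : Euc N → ℝ) (x : Euc N) : ℝ :=
  ∑ i : Fin N, fderiv ℝ (fun y => fderiv ℝ φ y (EuclideanSpace.single i (1 : ℝ))) x
    (EuclideanSpace.single i (1 : ℝ))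

/-- The open time interval `(0,T)`, for `T ∈ (0,∞]`. -/
def TimeSet (T : ℝ≥0∞) : Set ℝ := {t : ℝ | 0 < t ∧ ENNReal.ofReal t < T}

/-- The time interval `[0,T)`, for `T ∈ (0,∞]`. -/
def TimeSet0 (T : ℝ≥0∞) : Set ℝ := {t : ℝ | 0 ≤ t ∧ ENNReal.ofReal t < T}

/-- Very weak solution of `ρ u_t = Δ(u^m)` on `ℝᴺ × (0,T)` with initial datum `u₀`. -/
def IsVeryWeakSol {N : ℕ} (ρ : Euc N → ℝ) (m : ℝ) (T : ℝ≥0∞)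
    (u : Euc N → ℝ → ℝ) (u₀ : Euc N → ℝ) : Prop :=
  (∀ t ∈ TimeSet0 T, LocInt1 ρ (fun x => u x t)) ∧
  (∀ s ∈ TimeSet0 T, ∀ R : ℝ, 0 < R →
    Tendsto (fun t => ∫ x in ball (0 : Euc N) R, |u x t - u x s| * ρ x)
      (nhdsWithin s (TimeSet0 T)) (nhds 0)) ∧
  (∀ᵐ x : Euc N ∂volume, u x 0 = u₀ x) ∧
  (∀ R : ℝ, 0 < R → ∀ a b : ℝ, 0 < a → a ≤ b → ENNReal.ofReal b < T →
    IntegrableOn (fun p : Euc N × ℝ => spow m (u p.1 p.2)) (ball (0 : Euc N) R ×ˢ Icc a b)) ∧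
  (∀ φ : Euc N × ℝ → ℝ, ContDiff ℝ (⊤ : ℕ∞) φ → HasCompactSupport φ →
    tsupport φ ⊆ {p : Euc N × ℝ | p.2 ∈ TimeSet T} →
    -(∫ p : Euc N × ℝ in (univ : Set (Euc N)) ×ˢ TimeSet T,
        u p.1 p.2 * deriv (fun s => φ (p.1, s)) p.2 * ρ p.1) =
      ∫ p : Euc N × ℝ in (univ : Set (Euc N)) ×ˢ TimeSet T,
        spow m (u p.1 p.2) * lap (fun y => φ (y, p.2)) p.1)

/-- The existence time `T = C / L^(m-1)` if `L > 0`, and `T = ∞` if `L = 0` (here `L = ℓ(u₀)` or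
`L = ‖u₀‖_{1,r}`). -/
def Tof (C m L : ℝ) : ℝ≥0∞ := if 0 < L then ENNReal.ofReal (C / L ^ (m - 1)) else ⊤

end

lemma hasFDerivAt_norm_rpow_aux {N : ℕ} (e : ℝ) (y : Euc N) (hy : y ≠ 0) :
    HasFDerivAt (fun z : Euc N => ‖z‖ ^ e) ((e * ‖y‖ ^ (e - 2)) • innerSL ℝ y) y := by
  have hpos : 0 < ‖y‖ := norm_pos_iff.mpr hy
  have h1 : HasFDerivAt (fun z : Euc N => ‖z‖ ^ 2) (2 • innerSL ℝ y) y :=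
    (hasStrictFDerivAt_norm_sq y).hasFDerivAt
  have h2 := h1.rpow_const (p := e / 2) (Or.inl (by positivity))
  have key : ∀ (z : Euc N) (c : ℝ), (‖z‖ ^ 2) ^ (c / 2) = ‖z‖ ^ c := by
    intro z c
    rw [← Real.rpow_natCast, ← Real.rpow_mul (norm_nonneg _)]
    congr 1
    push_cast
    ring
  have e1 : e / 2 - 1 = (e - 2) / 2 := by ring
  rw [e1, key] at h2
  simp only [key] at h2
  refine h2.congr_fderiv ?_
  ext v
  simp only [ContinuousLinearMap.smul_apply, smul_eq_mul, nsmul_eq_mul]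
  ring

lemma hasFDerivAt_V_rpow_aux {N : ℕ} (A B e q : ℝ) (y : Euc N) (hy : y ≠ 0)
    (hV : 0 < A + B * ‖y‖ ^ e) :
    HasFDerivAt (fun z : Euc N => (A + B * ‖z‖ ^ e) ^ q)
      ((q * (A + B * ‖y‖ ^ e) ^ (q - 1) * B * (e * ‖y‖ ^ (e - 2))) • innerSL ℝ y) y := by
  have h := (((hasFDerivAt_norm_rpow_aux e y hy).const_mul B).const_add A).rpow_const (p := q)
    (Or.inl hV.ne')
  refine h.congr_fderiv ?_
  ext v
  simp only [ContinuousLinearMap.smul_apply, smul_eq_mul, nsmul_eq_mul]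
  ring

lemma lap_V_rpow_aux {N : ℕ} (A B e q : ℝ) (x : Euc N) (hx : x ≠ 0)
    (hV : ∀ y : Euc N, y ≠ 0 → 0 < A + B * ‖y‖ ^ e) :
    lap (fun z : Euc N => (A + B * ‖z‖ ^ e) ^ q) x =
      q * B * e * ((q - 1) * (A + B * ‖x‖ ^ e) ^ (q - 2) * B * e * (‖x‖ ^ (e - 2)) ^ 2 * ‖x‖ ^ 2
        + (A + B * ‖x‖ ^ e) ^ (q - 1) * ‖x‖ ^ (e - 2) * (e - 2 + N)) := by
  have hpos : 0 < ‖x‖ := norm_pos_iff.mpr hx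
  have hterm : ∀ i : Fin N,
      fderiv ℝ (fun y => fderiv ℝ (fun z : Euc N => (A + B * ‖z‖ ^ e) ^ q) y
        (EuclideanSpace.single i (1 : ℝ))) x (EuclideanSpace.single i (1 : ℝ)) =
      q * B * e * (((q - 1) * (A + B * ‖x‖ ^ e) ^ (q - 2) * B * e * (‖x‖ ^ (e - 2)) ^ 2
        + (A + B * ‖x‖ ^ e) ^ (q - 1) * ((e - 2) * ‖x‖ ^ (e - 2 - 2))) * (x i) ^ 2
        + (A + B * ‖x‖ ^ e) ^ (q - 1) * ‖x‖ ^ (e - 2)) := by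
    intro i
    have hev : (fun y => fderiv ℝ (fun z : Euc N => (A + B * ‖z‖ ^ e) ^ q) y
        (EuclideanSpace.single i (1 : ℝ))) =ᶠ[nhds x]
        (fun y => (q * B * e) * ((A + B * ‖y‖ ^ e) ^ (q - 1) * ‖y‖ ^ (e - 2)
          * (EuclideanSpace.proj i : Euc N →L[ℝ] ℝ) y)) := by
      filter_upwards [isOpen_ne.mem_nhds hx] with y hy
      rw [(hasFDerivAt_V_rpow_aux A B e q y hy (hV y hy)).fderiv]
      simp [EuclideanSpace.inner_single_right]
      ring
    rw [hev.fderiv_eq]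
    have h := (((hasFDerivAt_V_rpow_aux A B e (q - 1) x hx (hV x hx)).mul
      (hasFDerivAt_norm_rpow_aux (e - 2) x hx)).mul
      (EuclideanSpace.proj i : Euc N →L[ℝ] ℝ).hasFDerivAt).const_mul (q * B * e)
    have h' := h.fderiv
    simp only [Pi.mul_def] at h'
    rw [h']
    have e2 : q - 1 - 1 = q - 2 := by ring
    simp [EuclideanSpace.inner_single_right, e2]
    ring
  unfold lap
  simp_rw [hterm]
  rw [← Finset.mul_sum, Finset.sum_add_distrib, ← Finset.mul_sum]
  have hs : ∑ i : Fin N, (x i) ^ 2 = ‖x‖ ^ 2 := by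
    rw [EuclideanSpace.norm_sq_eq]; simp
  have hr : ‖x‖ ^ (e - 2) = ‖x‖ ^ (e - 2 - 2) * ‖x‖ ^ 2 := by
    rw [← Real.rpow_natCast, ← Real.rpow_add hpos]; congr 1; push_cast; ring
  rw [hs]
  simp only [Finset.sum_const, Finset.card_univ, Fintype.card_fin, nsmul_eq_mul]
  linear_combination (-(q * B * e * (e - 2) * (A + B * ‖x‖ ^ e) ^ (q - 1))) * hr

open MeasureTheory Metric Filter Set ENNReal in
/-- **Explicit blow-up solution for the straight-power weight** `ρ(x) = |x|^{-γ}`: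
the function `u(x,t) = [a T^κ (T-t)^{-κ} + (κ/(m(2-γ)(N-γ))) |x|^{2-γ}/(T-t)]^{1/(m-1)}`
is smooth away from `x = 0` and solves `|x|^{-γ} u_t = Δ(u^m)` there. -/
theorem explicit_blowup_solution
    (N : ℕ) (hN : 3 ≤ N) (m γ T a : ℝ)
    (hm : 1 < m) (hγ0 : 0 < γ) (hγ2 : γ < 2) (hT : 0 < T) (ha : 0 ≤ a) :
    let κ : ℝ := ((N : ℝ) - γ) * (m - 1) / (((N : ℝ) - γ) * (m - 1) + 2 - γ)
    let U : Euc N → ℝ → ℝ := fun x t =>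
      (a * T ^ κ * (T - t) ^ (-κ) +
        κ / (m * (2 - γ) * ((N : ℝ) - γ)) * ‖x‖ ^ (2 - γ) / (T - t)) ^ (1 / (m - 1))
    ∀ x : Euc N, x ≠ 0 → ∀ t : ℝ, 0 < t → t < T →
      ContDiffAt ℝ (⊤ : ℕ∞) (fun p : Euc N × ℝ => U p.1 p.2) (x, t) ∧
      ‖x‖ ^ (-γ) * deriv (fun s => U x s) t = lap (fun y => U y t ^ m) x := by
  intro κ U x hx t ht0 htT
  have hN' : (3 : ℝ) ≤ N := by exact_mod_cast hN
  have hm1 : 0 < m - 1 := by linarith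
  have hNg : 0 < (N : ℝ) - γ := by linarith
  have h2g : 0 < 2 - γ := by linarith
  have hD : 0 < ((N : ℝ) - γ) * (m - 1) + 2 - γ := by
    have := mul_pos hNg hm1
    linarith
  have hκ : 0 < κ := div_pos (mul_pos hNg hm1) hD
  have hb : 0 < κ / (m * (2 - γ) * ((N : ℝ) - γ)) := by positivity
  have hκeq : κ * (((N : ℝ) - γ) * (m - 1) + 2 - γ) = ((N : ℝ) - γ) * (m - 1) :=
    div_mul_cancel₀ _ hD.ne'
  have hbeq : κ / (m * (2 - γ) * ((N : ℝ) - γ)) * (m * (2 - γ) * ((N : ℝ) - γ)) = κ :=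
    div_mul_cancel₀ _ (by positivity)
  clear_value κ
  set b : ℝ := κ / (m * (2 - γ) * ((N : ℝ) - γ)) with hbdef
  have hU : U = fun x t => (a * T ^ κ * (T - t) ^ (-κ) +
      b * ‖x‖ ^ (2 - γ) / (T - t)) ^ (1 / (m - 1)) := rfl
  clear_value U
  clear_value b
  subst hU
  beta_reduce
  have hτ : 0 < T - t := by linarith
  have hpos : 0 < ‖x‖ := norm_pos_iff.mpr hx
  have hA0 : 0 ≤ a * T ^ κ * (T - t) ^ (-κ) := by positivity
  have hVpos : ∀ y : Euc N, y ≠ 0 →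
      0 < a * T ^ κ * (T - t) ^ (-κ) + b / (T - t) * ‖y‖ ^ (2 - γ) := by
    intro y hy
    have : 0 < ‖y‖ := norm_pos_iff.mpr hy
    positivity
  have hV0 : 0 < a * T ^ κ * (T - t) ^ (-κ) + b * ‖x‖ ^ (2 - γ) / (T - t) := by positivity
  refine ⟨?_, ?_⟩
  · have hs : ContDiffAt ℝ (⊤ : ℕ∞) (fun p : Euc N × ℝ => T - p.2) (x, t) := by fun_prop
    have hn : ContDiffAt ℝ (⊤ : ℕ∞) (fun p : Euc N × ℝ => ‖p.1‖) (x, t) :=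
      contDiffAt_fst.norm ℝ hx
    refine ContDiffAt.rpow_const_of_ne (ContDiffAt.add ?_ ?_) hV0.ne'
    · exact contDiffAt_const.mul (hs.rpow_const_of_ne hτ.ne')
    · exact (contDiffAt_const.mul (hn.rpow_const_of_ne hpos.ne')).div hs hτ.ne'
  · have hfun : (fun y : Euc N => ((a * T ^ κ * (T - t) ^ (-κ) +
        b * ‖y‖ ^ (2 - γ) / (T - t)) ^ (1 / (m - 1))) ^ m) = fun y : Euc N =>
        (a * T ^ κ * (T - t) ^ (-κ) + b / (T - t) * ‖y‖ ^ (2 - γ)) ^ (1 / (m - 1) * m) := by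
      funext y
      have e0 : b * ‖y‖ ^ (2 - γ) / (T - t) = b / (T - t) * ‖y‖ ^ (2 - γ) := by ring
      beta_reduce
      rw [e0, ← Real.rpow_mul]
      positivity
    rw [hfun, lap_V_rpow_aux _ _ _ _ x hx hVpos]
    have hsub : HasDerivAt (fun s : ℝ => T - s) (-1) t := by
      simpa using (hasDerivAt_id t).const_sub T
    have hd := (((hsub.rpow_const (p := -κ) (Or.inl hτ.ne')).const_mul (a * T ^ κ)).add
      ((hasDerivAt_const t (b * ‖x‖ ^ (2 - γ))).div hsub hτ.ne')).rpow_const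
      (p := 1 / (m - 1)) (Or.inl hV0.ne')
    erw [hd.deriv]
    simp only [Pi.add_apply, Pi.div_apply]
    have e0 : b * ‖x‖ ^ (2 - γ) / (T - t) = b / (T - t) * ‖x‖ ^ (2 - γ) := by ring
    have e1 : (T - t) ^ (-κ - 1) = (T - t) ^ (-κ) / (T - t) := Real.rpow_sub_one hτ.ne' _
    have e3 : ‖x‖ ^ (2 - γ) = ‖x‖ ^ (-γ) * ‖x‖ ^ 2 := by
      rw [← Real.rpow_natCast, ← Real.rpow_add hpos]; congr 1; push_cast; ring
    have e4 : (2 : ℝ) - γ - 2 = -γ := by ring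
    have q1 : 1 / (m - 1) * m - 1 = 1 / (m - 1) := by field_simp; ring
    have q2 : 1 / (m - 1) * m - 2 = 1 / (m - 1) - 1 := by linarith
    have hVx := hVpos x hx
    rw [e0, e1, e4, q1, q2]
    have hVp : (a * T ^ κ * (T - t) ^ (-κ) + b / (T - t) * ‖x‖ ^ (2 - γ)) ^ (1 / (m - 1)) =
        (a * T ^ κ * (T - t) ^ (-κ) + b / (T - t) * ‖x‖ ^ (2 - γ)) ^ (1 / (m - 1) - 1) *
        (a * T ^ κ * (T - t) ^ (-κ) + b / (T - t) * ‖x‖ ^ (2 - γ)) := by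
      rw [Real.rpow_sub_one hVx.ne', div_mul_cancel₀ _ hVx.ne']
    rw [hVp]
    generalize (a * T ^ κ * (T - t) ^ (-κ) + b / (T - t) * ‖x‖ ^ (2 - γ)) ^ (1 / (m - 1) - 1) = W
    rw [e3]
    generalize a * T ^ κ = A₁ at *
    generalize (T - t) ^ (-κ) = A₂ at *
    generalize ‖x‖ ^ (-γ) = R at *
    generalize ‖x‖ ^ 2 = S at *
    have k1 : b * m * (2 - γ) * ((N : ℝ) - γ) = κ := by linarith
    have k2 : b * m * (2 - γ) * (((N : ℝ) - γ) * (m - 1) + 2 - γ) = m - 1 := by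
      apply mul_left_cancel₀ hNg.ne'
      linear_combination hκeq + (((N : ℝ) - γ) * (m - 1) + 2 - γ) * k1
    have hp : 1 / (m - 1) * (m - 1) = 1 := div_mul_cancel₀ _ hm1.ne'
    clear q1 q2 hVp
    generalize 1 / (m - 1) = p at *
    have k3 : m * b * (2 - γ) * (p * (2 - γ) + ((N : ℝ) - γ)) = 1 := by
      linear_combination p * k2 + (1 - b * m * (2 - γ) * ((N : ℝ) - γ)) * hp
    simp only [div_eq_mul_inv, ← inv_pow]
    have hi : (T - t) * (T - t)⁻¹ = 1 := mul_inv_cancel₀ hτ.ne'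
    generalize (T - t)⁻¹ = i at *
    linear_combination (-(p * W * R * i * A₁ * A₂)) * k1 - p * W * R * b * R * S * i ^ 2 * k3
end

section
/- Let N ≥ 3, m > 1, γ ∈ [0,2) and k > 0. Then there exists a constant C > 0 depending only on N, m, γ, k such that for every A > 0, setting S := C/A^{m−1} and defining ū(x,t) := A (1 − t/S)^{−1/(m−1)} (1+|x|²)^{(2−γ)/(2(m−1))} on ℝᴺ × [0,S), the following supersolution inequality holds pointwise for all x ∈ ℝᴺ and t ∈ (0,S): k(1+|x|)^{−γ} ∂ū/∂t (x,t) ≥ Δ_x(ūᵐ)(x,t). -/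
open MeasureTheory Metric Filter Set ENNReal

theorem sb_hasFDerivAt_w {N : ℕ} (B q : ℝ) (x : Euc N) :
    HasFDerivAt (fun y : Euc N => B * (1 + ‖y‖ ^ 2) ^ q)
      (B • ((q * (1 + ‖x‖ ^ 2) ^ (q - 1)) • ((2 : ℝ) • innerSL ℝ x))) x := by
  have h1 : HasFDerivAt (fun y : Euc N => 1 + ‖y‖ ^ 2) ((2 : ℝ) • innerSL ℝ x) x := by
    have := (hasStrictFDerivAt_norm_sq x).hasFDerivAt.const_add 1
    have e : ((2 : ℝ) • innerSL ℝ x : Euc N →L[ℝ] ℝ) = (2 : ℕ) • innerSL ℝ x := by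
      ext v
      simp
    rw [e]
    exact this
  have hpos : (1 + ‖x‖ ^ 2) ≠ 0 := by positivity
  exact (h1.rpow_const (Or.inl hpos)).const_mul B

theorem sb_lap {N : ℕ} (B q : ℝ) (x : Euc N) :
    lap (fun y : Euc N => B * (1 + ‖y‖ ^ 2) ^ q) x =
      B * (2 * q * N * (1 + ‖x‖ ^ 2) ^ (q - 1)
        + 4 * q * (q - 1) * ‖x‖ ^ 2 * (1 + ‖x‖ ^ 2) ^ (q - 2)) := by
  unfold lap
  have key : ∀ i : Fin N,
      fderiv ℝ (fun y => fderiv ℝ (fun y : Euc N => B * (1 + ‖y‖ ^ 2) ^ q) y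
        (EuclideanSpace.single i (1 : ℝ))) x (EuclideanSpace.single i (1 : ℝ)) =
      B * (2 * q * (1 + ‖x‖ ^ 2) ^ (q - 1))
        + B * (4 * q * (q - 1) * (1 + ‖x‖ ^ 2) ^ (q - 2)) * (x i) ^ 2 := by
    intro i
    have e1 : (fun y => fderiv ℝ (fun y : Euc N => B * (1 + ‖y‖ ^ 2) ^ q) y
        (EuclideanSpace.single i (1 : ℝ))) =
        fun y : Euc N => ((2 * B * q) * (1 + ‖y‖ ^ 2) ^ (q - 1)) * y i := by
      funext y
      rw [(sb_hasFDerivAt_w B q y).fderiv]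
      simp [EuclideanSpace.inner_single_right]
      ring
    rw [e1]
    have h2 : HasFDerivAt (fun y : Euc N => y i)
        (EuclideanSpace.proj i : Euc N →L[ℝ] ℝ) x :=
      (EuclideanSpace.proj i : Euc N →L[ℝ] ℝ).hasFDerivAt
    have h3 := ((sb_hasFDerivAt_w (2 * B * q) (q - 1) x).mul h2).fderiv
    simp only [Pi.mul_def] at h3
    rw [h3]
    have e2 : q - 1 - 1 = q - 2 := by ring
    simp [EuclideanSpace.inner_single_right, e2]
    ring
  rw [Finset.sum_congr rfl (fun i _ => key i), Finset.sum_add_distrib,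
    ← Finset.mul_sum Finset.univ (fun i => (x i) ^ 2), ← EuclideanSpace.real_norm_sq_eq]
  simp
  ring

theorem sb_time (A c S W t : ℝ) (hS : 0 < S) (ht : t < S) :
    deriv (fun s => A * (1 - s / S) ^ (-c) * W) t =
      A * (c / S * (1 - t / S) ^ (-c - 1)) * W := by
  have hpos : 0 < 1 - t / S := by
    rw [sub_pos, div_lt_one hS]; exact ht
  have h1 : HasDerivAt (fun s : ℝ => 1 - s / S) (-(1 / S)) t := by
    simpa using ((hasDerivAt_id t).div_const S).const_sub 1
  have h2 := ((h1.rpow_const (p := -c) (Or.inl hpos.ne')).const_mul A).mul_const W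
  rw [h2.deriv]
  ring

theorem sb_weight (γ r : ℝ) (hγ0 : 0 ≤ γ) (hr : 0 ≤ r) :
    (2 : ℝ) ^ (-(γ / 2)) * (1 + r ^ 2) ^ (-(γ / 2)) ≤ (1 + r) ^ (-γ) := by
  have e : (1 + r) ^ (-γ) = ((1 + r) ^ 2) ^ (-(γ / 2)) := by
    rw [← Real.rpow_natCast, ← Real.rpow_mul (by positivity)]
    congr 1
    push_cast
    ring
  rw [e, ← Real.mul_rpow (by norm_num) (by positivity)]
  apply Real.rpow_le_rpow_of_nonpos (by positivity)
  · nlinarith [sq_nonneg (1 - r)]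
  · linarith

open MeasureTheory Metric Filter Set ENNReal in
/-- **Supersolution barrier** (from the proof of Lemma 4.3 of Muratori–Petitt): there is a
constant `C > 0` depending only on `N, m, γ, k` such that, with `S = C/A^(m-1)`, the barrier
`ū(x,t) = A (1-t/S)^{-1/(m-1)} (1+|x|²)^{(2-γ)/(2(m-1))}` satisfies
`k (1+|x|)^{-γ} ∂ū/∂t ≥ Δ(ū^m)` pointwise on `ℝᴺ × (0,S)`. -/
theorem supersolution_barrier
    (N : ℕ) (hN : 3 ≤ N) (m γ k : ℝ)
    (hm : 1 < m) (hγ0 : 0 ≤ γ) (hγ2 : γ < 2) (hk : 0 < k) :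
    ∃ C : ℝ, 0 < C ∧
      ∀ A : ℝ, 0 < A →
        let S : ℝ := C / A ^ (m - 1)
        let ub : Euc N → ℝ → ℝ := fun x t =>
          A * (1 - t / S) ^ (-(1 / (m - 1))) * (1 + ‖x‖ ^ 2) ^ ((2 - γ) / (2 * (m - 1)))
        ∀ x : Euc N, ∀ t : ℝ, 0 < t → t < S →
          lap (fun y => ub y t ^ m) x ≤
            k * (1 + ‖x‖) ^ (-γ) * deriv (fun s => ub x s) t := by
  have hm1 : 0 < m - 1 := by linarith
  obtain ⟨p, hp⟩ : ∃ p, p = (2 - γ) / (2 * (m - 1)) := ⟨_, rfl⟩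
  have hp0 : 0 < p := by rw [hp]; apply div_pos <;> linarith
  obtain ⟨q, hq⟩ : ∃ q, q = p * m := ⟨_, rfl⟩
  have hq0 : 0 < q := by rw [hq]; positivity
  have hqp : q - 1 = p + -(γ / 2) := by
    rw [hq, hp]; field_simp; ring
  have hN0 : (0 : ℝ) < N := by
    have : 0 < N := by omega
    exact_mod_cast this
  obtain ⟨K, hK⟩ : ∃ K : ℝ, K = 2 * q * N + 4 * q ^ 2 := ⟨_, rfl⟩
  have hK0 : 0 < K := by rw [hK]; positivity
  refine ⟨k * 2 ^ (-(γ / 2)) / ((m - 1) * K), by positivity, ?_⟩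
  intro A hA S ub x t ht htS
  have hS : 0 < S := by positivity
  have hτ : 0 < 1 - t / S := by
    rw [sub_pos, div_lt_one hS]; exact htS
  have hub : (fun y => ub y t ^ m) = fun y : Euc N =>
      (A ^ m * (1 - t / S) ^ (-(1 / (m - 1)) - 1)) * (1 + ‖y‖ ^ 2) ^ q := by
    funext y
    simp only [ub, ← hp]
    rw [Real.mul_rpow (by positivity) (by positivity), Real.mul_rpow hA.le (by positivity),
      ← Real.rpow_mul hτ.le, ← Real.rpow_mul (by positivity), ← hq]
    have : -(1 / (m - 1)) * m = -(1 / (m - 1)) - 1 := by field_simp; ring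
    rw [this]
  rw [hub, sb_lap]
  simp only [ub, ← hp]
  rw [sb_time A (1 / (m - 1)) S _ t hS htS]
  have hAm : A ^ m = A ^ (m - 1) * A := by
    rw [← Real.rpow_add_one hA.ne']; congr 1; ring
  have hw : 0 < 1 + ‖x‖ ^ 2 := by positivity
  have hwt := sb_weight γ ‖x‖ hγ0 (norm_nonneg x)
  have hq2 : (1 + ‖x‖ ^ 2) ^ (q - 1) = (1 + ‖x‖ ^ 2) ^ (q - 2) * (1 + ‖x‖ ^ 2) := by
    rw [← Real.rpow_add_one hw.ne']; congr 1; ring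
  have hq1 : (1 + ‖x‖ ^ 2) ^ (q - 1) = (1 + ‖x‖ ^ 2) ^ p * (1 + ‖x‖ ^ 2) ^ (-(γ / 2)) := by
    rw [← Real.rpow_add hw, hqp]
  have hlap : 2 * q * N * (1 + ‖x‖ ^ 2) ^ (q - 1)
        + 4 * q * (q - 1) * ‖x‖ ^ 2 * (1 + ‖x‖ ^ 2) ^ (q - 2)
        ≤ K * (1 + ‖x‖ ^ 2) ^ (q - 1) := by
    have h0 : 0 < (1 + ‖x‖ ^ 2) ^ (q - 2) := by positivity
    have h1 : 0 ≤ (4 * q ^ 2 + 4 * q * ‖x‖ ^ 2) * (1 + ‖x‖ ^ 2) ^ (q - 2) := by positivity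
    rw [hK, hq2]
    nlinarith
  have hB : 0 < A ^ m * (1 - t / S) ^ (-(1 / (m - 1)) - 1) := by positivity
  have hSv : 1 / S = A ^ (m - 1) * ((m - 1) * K) / (k * 2 ^ (-(γ / 2))) := by
    simp only [S]
    have : (0 : ℝ) < 2 ^ (-(γ / 2)) := by positivity
    have : 0 < A ^ (m - 1) := by positivity
    field_simp
  have h2 : (0 : ℝ) < 2 ^ (-(γ / 2)) := by positivity
  calc _ ≤ (A ^ m * (1 - t / S) ^ (-(1 / (m - 1)) - 1)) * (K * (1 + ‖x‖ ^ 2) ^ (q - 1)) :=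
        mul_le_mul_of_nonneg_left hlap hB.le
    _ = (A ^ m * (1 - t / S) ^ (-(1 / (m - 1)) - 1)) * (K / 2 ^ (-(γ / 2))
          * (1 + ‖x‖ ^ 2) ^ p) * (2 ^ (-(γ / 2)) * (1 + ‖x‖ ^ 2) ^ (-(γ / 2))) := by
        rw [hq1]; field_simp
    _ ≤ (A ^ m * (1 - t / S) ^ (-(1 / (m - 1)) - 1)) * (K / 2 ^ (-(γ / 2))
          * (1 + ‖x‖ ^ 2) ^ p) * (1 + ‖x‖) ^ (-γ) := by
        apply mul_le_mul_of_nonneg_left hwt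
        positivity
    _ = _ := by
        have e : 1 / (m - 1) / S = 1 / (m - 1) * (1 / S) := by ring
        rw [e, hSv, hAm]
        generalize (1 - t / S) ^ (-(1 / (m - 1)) - 1) = T
        field_simp
end

section
/- Let N ≥ 3, m > 1, γ ∈ [0,2), 0 < k ≤ K, and let ρ : (0,∞) → ℝ be measurable with k(1+y)^{−γ} ≤ ρ(y) ≤ K y^{−γ} for a.e. y > 0. Then for every β > 0 there exists a continuous, strictly increasing function V : [0,∞) → ℝ with V(0) = β^m, V(y) ≥ β^m for all y ≥ 0, satisfying the integral equation V(y) = β^m + ∫₀^y z^{−(N−1)} ( ∫₀^z ζ^{N−1} ρ(ζ) V(ζ)^{1/m} dζ ) dz for all y ≥ 0. -/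
open MeasureTheory Metric Filter Set ENNReal

/-- The integral operator, on extended nonnegative functions. -/
noncomputable def radOp (c : ℝ≥0∞) (q : ℝ) (hq : 0 ≤ q) (g w : ℝ → ℝ≥0∞) : (ℝ → ℝ≥0∞) →o (ℝ → ℝ≥0∞) where
  toFun V y := c + ∫⁻ z in Ioc 0 y, g z * ∫⁻ ζ in Ioc 0 z, w ζ * V ζ ^ q
  monotone' V U h y := by
    have := h
    dsimp only
    gcongr with z ζ
    exact h ζ

theorem exists_bound (m : ℝ) (hm : 1 < m) (c a : ℝ) (hc : 0 < c) (ha : 0 ≤ a) :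
    ∃ M : ℝ, 0 ≤ M ∧ c + a * M ^ (1 / m) ≤ M := by
  set t : ℝ := (1 + c + a) ^ (1 / (m - 1)) with ht
  have hm1 : 0 < m - 1 := by linarith
  have hb : 1 ≤ 1 + c + a := by linarith
  have h1 : 1 ≤ t := Real.one_le_rpow hb (by positivity)
  have h2 : t ^ (m - 1) = 1 + c + a := by
    rw [ht, ← Real.rpow_mul (by linarith), one_div_mul_cancel hm1.ne', Real.rpow_one]
  have h3 : t ^ m = (1 + c + a) * t := by
    have : t ^ m = t ^ ((m - 1) + 1) := by ring_nf
    rw [this, Real.rpow_add (by linarith), h2, Real.rpow_one]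
  have h4 : (t ^ m) ^ (1 / m) = t := by
    rw [← Real.rpow_mul (by linarith), mul_one_div_cancel (by linarith), Real.rpow_one]
  refine ⟨t ^ m, by positivity, ?_⟩
  rw [h4, h3]
  nlinarith

theorem exists_fix (m : ℝ) (hm : 1 < m) (c : ℝ) (hc : 0 < c) (g w : ℝ → ℝ≥0∞)
    (hw : Measurable w)
    (hA : ∀ R : ℝ, ∫⁻ z in Ioc 0 R, g z * ∫⁻ ζ in Ioc 0 z, w ζ ≠ ⊤) :
    ∃ V : ℝ → ℝ≥0∞,
      (∀ y, V y = ENNReal.ofReal c +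
        ∫⁻ z in Ioc 0 y, g z * ∫⁻ ζ in Ioc 0 z, w ζ * V ζ ^ (1 / m)) ∧
      ∀ R : ℝ, ∃ M : ℝ≥0∞, M ≠ ⊤ ∧ ∀ y ≤ R, V y ≤ M := by
  have hq : 0 ≤ 1 / m := by positivity
  set T := radOp (ENNReal.ofReal c) (1 / m) hq g w with hT
  refine ⟨OrderHom.lfp T, fun y => (congrFun T.map_lfp y).symm, fun R => ?_⟩
  set A := ∫⁻ z in Ioc 0 R, g z * ∫⁻ ζ in Ioc 0 z, w ζ with hAdef
  obtain ⟨M, hM0, hM⟩ := exists_bound m hm c A.toReal hc ENNReal.toReal_nonneg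
  refine ⟨ENNReal.ofReal M, ENNReal.ofReal_ne_top, ?_⟩
  classical
  let U : ℝ → ℝ≥0∞ := fun y => if y ≤ R then ENNReal.ofReal M else ⊤
  have hU : T U ≤ U := by
    intro y
    by_cases hy : y ≤ R
    · have e1 : U y = ENNReal.ofReal M := if_pos hy
      rw [e1]
      have hp : ENNReal.ofReal M ^ (1 / m) ≠ ⊤ := ENNReal.rpow_ne_top_of_nonneg hq ofReal_ne_top
      calc T U y = ENNReal.ofReal c +
            ∫⁻ z in Ioc 0 y, g z * ∫⁻ ζ in Ioc 0 z, w ζ * U ζ ^ (1 / m) := rfl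
        _ ≤ ENNReal.ofReal c + ∫⁻ z in Ioc 0 y,
              (g z * ∫⁻ ζ in Ioc 0 z, w ζ) * ENNReal.ofReal M ^ (1 / m) := by
            gcongr ENNReal.ofReal c + ?_
            refine setLIntegral_mono' measurableSet_Ioc fun z hz => ?_
            rw [mul_assoc, ← lintegral_mul_const _ hw]
            gcongr g z * ?_
            refine setLIntegral_mono' measurableSet_Ioc fun ζ hζ => ?_
            have : U ζ = ENNReal.ofReal M := if_pos (hζ.2.trans (hz.2.trans hy))
            rw [this]
        _ ≤ ENNReal.ofReal c + A * ENNReal.ofReal M ^ (1 / m) := by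
            gcongr
            rw [lintegral_mul_const' _ _ hp]
            gcongr
            exact lintegral_mono_set (Ioc_subset_Ioc_right hy)
        _ = ENNReal.ofReal (c + A.toReal * M ^ (1 / m)) := by
            rw [ENNReal.ofReal_add hc.le (by positivity),
              ENNReal.ofReal_mul ENNReal.toReal_nonneg, ENNReal.ofReal_toReal (hA R),
              ENNReal.ofReal_rpow_of_nonneg hM0 hq]
        _ ≤ _ := ENNReal.ofReal_le_ofReal hM
    · have e1 : U y = ⊤ := if_neg hy
      rw [e1]; exact le_top
  intro y hy
  have := T.lfp_le hU y
  rwa [show U y = ENNReal.ofReal M from if_pos hy] at this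

open MeasureTheory Metric Filter Set ENNReal in
/-- **Existence for the radial elliptic ODE** (Step 1 of the proof of Proposition 2.7 of
Muratori–Petitt): for every `β > 0` the integral equation
`V(y) = β^m + ∫₀^y z^{-(N-1)} ∫₀^z ζ^{N-1} ρ(ζ) V(ζ)^{1/m} dζ dz` has a continuous,
strictly increasing global solution with `V(0) = β^m` and `V ≥ β^m`. -/
theorem radial_ode_existence
    (N : ℕ) (hN : 3 ≤ N) (m γ k K : ℝ)
    (hm : 1 < m) (hγ0 : 0 ≤ γ) (hγ2 : γ < 2) (hk : 0 < k) (hkK : k ≤ K)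
    (ρ : ℝ → ℝ) (hρm : Measurable ρ)
    (hρ : ∀ᵐ y ∂(volume.restrict (Ioi (0 : ℝ))),
      k * (1 + y) ^ (-γ) ≤ ρ y ∧ ρ y ≤ K * y ^ (-γ)) :
    ∀ β : ℝ, 0 < β →
      ∃ V : ℝ → ℝ,
        ContinuousOn V (Ici 0) ∧ StrictMonoOn V (Ici 0) ∧ V 0 = β ^ m ∧
        (∀ y : ℝ, 0 ≤ y → β ^ m ≤ V y) ∧
        (∀ y : ℝ, 0 ≤ y → V y = β ^ m +
          ∫ z in (0 : ℝ)..y, z ^ (-((N : ℝ) - 1)) *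
            ∫ ζ in (0 : ℝ)..z, ζ ^ ((N : ℝ) - 1) * ρ ζ * V ζ ^ (1 / m)) := by
  intro β hβ
  have hN' : (3 : ℝ) ≤ N := by exact_mod_cast hN
  have hm0 : 0 < m := by linarith
  set c : ℝ := β ^ m with hcdef
  have hc : 0 < c := Real.rpow_pos_of_pos hβ m
  have hρ' : ∀ᵐ y, 0 < y → k * (1 + y) ^ (-γ) ≤ ρ y ∧ ρ y ≤ K * y ^ (-γ) :=
    (ae_restrict_iff' measurableSet_Ioi).1 hρ
  have hρpos : ∀ᵐ y, 0 < y → 0 < ρ y := by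
    filter_upwards [hρ'] with y hy h0
    exact lt_of_lt_of_le (by positivity) (hy h0).1
  set g : ℝ → ℝ≥0∞ := fun z => ENNReal.ofReal (z ^ (-((N : ℝ) - 1))) with hg
  set w : ℝ → ℝ≥0∞ := fun ζ => ENNReal.ofReal (ζ ^ ((N : ℝ) - 1) * ρ ζ) with hwdef
  have hgm : Measurable g := by rw [hg]; fun_prop
  have hwm : Measurable w := by rw [hwdef]; fun_prop
  -- bounds on the inner integral of the weight
  have hW : ∀ z : ℝ, 0 < z →
      ∫⁻ ζ in Ioc 0 z, w ζ ≤ ENNReal.ofReal (K / (N - γ) * z ^ ((N : ℝ) - γ)) := by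
    intro z hz
    have hint : IntervalIntegrable (fun ζ : ℝ => K * ζ ^ ((N : ℝ) - 1 - γ)) volume 0 z :=
      (intervalIntegral.intervalIntegrable_rpow' (by linarith)).const_mul K
    have hI : ∫ ζ in (0 : ℝ)..z, K * ζ ^ ((N : ℝ) - 1 - γ) = K / (N - γ) * z ^ ((N : ℝ) - γ) := by
      rw [intervalIntegral.integral_const_mul, integral_rpow (Or.inl (by linarith))]
      have e : (N : ℝ) - 1 - γ + 1 = N - γ := by ring
      rw [e, Real.zero_rpow (by linarith)]
      ring
    rw [← hI, intervalIntegral.integral_of_le hz.le,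
      ofReal_integral_eq_lintegral_ofReal ((intervalIntegrable_iff_integrableOn_Ioc_of_le hz.le).1 hint)]
    · refine lintegral_mono_ae ?_
      rw [ae_restrict_iff' measurableSet_Ioc]
      filter_upwards [hρ'] with ζ h hζ
      refine ENNReal.ofReal_le_ofReal ?_
      calc ζ ^ ((N : ℝ) - 1) * ρ ζ ≤ ζ ^ ((N : ℝ) - 1) * (K * ζ ^ (-γ)) :=
            mul_le_mul_of_nonneg_left (h hζ.1).2 (Real.rpow_nonneg hζ.1.le _)
        _ = K * ζ ^ ((N : ℝ) - 1 - γ) := by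
            rw [sub_eq_add_neg ((N : ℝ) - 1), Real.rpow_add hζ.1]; ring
    · rw [EventuallyLE, ae_restrict_iff' measurableSet_Ioc]
      refine Eventually.of_forall fun ζ hζ => ?_
      have := Real.rpow_nonneg hζ.1.le ((N : ℝ) - 1 - γ)
      have hK : 0 ≤ K := by linarith
      simp only [Pi.zero_apply]
      positivity
  have hA : ∀ R : ℝ, ∫⁻ z in Ioc 0 R, g z * ∫⁻ ζ in Ioc 0 z, w ζ ≠ ⊤ := by
    intro R
    rcases le_or_gt R 0 with hR | hR
    · simp [Ioc_eq_empty_of_le hR]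
    have hint : IntervalIntegrable (fun z : ℝ => K / (N - γ) * z ^ (1 - γ)) volume 0 R :=
      (intervalIntegral.intervalIntegrable_rpow' (by linarith)).const_mul _
    have hfin := ((intervalIntegrable_iff_integrableOn_Ioc_of_le hR.le).1 hint).lintegral_lt_top
    refine (lt_of_le_of_lt ?_ hfin).ne
    refine setLIntegral_mono' measurableSet_Ioc fun z hz => ?_
    have h0 := Real.rpow_nonneg hz.1.le (-((N : ℝ) - 1))
    calc g z * ∫⁻ ζ in Ioc 0 z, w ζ
        ≤ g z * ENNReal.ofReal (K / (N - γ) * z ^ ((N : ℝ) - γ)) := by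
          gcongr; exact hW z hz.1
      _ = ENNReal.ofReal (K / (N - γ) * z ^ (1 - γ)) := by
          rw [hg, ← ENNReal.ofReal_mul h0]
          congr 1
          have e : 1 - γ = -((N : ℝ) - 1) + ((N : ℝ) - γ) := by ring
          rw [e, Real.rpow_add hz.1]; ring
  obtain ⟨V, hV, hVb⟩ := exists_fix m hm c hc g w hwm hA
  set J : ℝ → ℝ≥0∞ := fun z => ∫⁻ ζ in Ioc 0 z, w ζ * V ζ ^ (1 / m) with hJ
  have hVtop : ∀ y, V y ≠ ⊤ := fun y => by
    obtain ⟨M, hM, h⟩ := hVb y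
    exact ne_top_of_le_ne_top hM (h y le_rfl)
  have hVc : ∀ y, ENNReal.ofReal c ≤ V y := fun y => by
    rw [hV y]; exact le_self_add
  have hVmono : Monotone V := fun a b hab => by
    rw [hV a, hV b]
    gcongr
  have hVm : Measurable V := hVmono.measurable
  have hJmono : Monotone J := fun a b hab => lintegral_mono_set (Ioc_subset_Ioc_right hab)
  have hJm : Measurable J := hJmono.measurable
  have hJtop : ∀ z, J z ≠ ⊤ := by
    intro z
    rcases le_or_gt z 0 with hz | hz
    · simp [hJ, Ioc_eq_empty_of_le hz]
    obtain ⟨M, hM, h⟩ := hVb z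
    have : J z ≤ (∫⁻ ζ in Ioc 0 z, w ζ) * M ^ (1 / m) := by
      rw [← lintegral_mul_const _ hwm]
      refine setLIntegral_mono' measurableSet_Ioc fun ζ hζ => ?_
      gcongr
      exact h ζ hζ.2
    refine ne_top_of_le_ne_top (ENNReal.mul_ne_top ?_ ?_) this
    · exact ne_top_of_le_ne_top ofReal_ne_top (hW z hz)
    · exact ENNReal.rpow_ne_top_of_nonneg (by positivity) hM
  have hJpos : ∀ z, 0 < z → 0 < J z := by
    intro z hz
    rw [pos_iff_ne_zero]
    intro h0
    rw [hJ] at h0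
    rw [lintegral_eq_zero_iff (by fun_prop), EventuallyEq, ae_restrict_iff' measurableSet_Ioc] at h0
    have : ∀ᵐ ζ : ℝ, ζ ∉ Ioc 0 z := by
      filter_upwards [h0, hρpos] with ζ h1 h2 hζ
      have h3 := h1 hζ
      have h4 : 0 < w ζ := ENNReal.ofReal_pos.2 (mul_pos (Real.rpow_pos_of_pos hζ.1 _) (h2 hζ.1))
      have h5 : 0 < V ζ := lt_of_lt_of_le (ENNReal.ofReal_pos.2 hc) (hVc ζ)
      have h6 : 0 < V ζ ^ (1 / m) := ENNReal.rpow_pos h5 (hVtop ζ)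
      exact (ENNReal.mul_pos h4.ne' h6.ne').ne' h3
    have h7 : volume (Ioc 0 z) = 0 := measure_eq_zero_iff_ae_notMem.2 this
    rw [Real.volume_Ioc, ENNReal.ofReal_eq_zero] at h7
    linarith
  set G : ℝ → ℝ := fun z => z ^ (-((N : ℝ) - 1)) * (J z).toReal with hG
  have hGm : Measurable G := by rw [hG]; fun_prop
  have hGpos : ∀ z, 0 < z → 0 < G z := fun z hz =>
    mul_pos (Real.rpow_pos_of_pos hz _) (ENNReal.toReal_pos (hJpos z hz).ne' (hJtop z))
  have hGof : ∀ z, 0 < z → ENNReal.ofReal (G z) = g z * J z := fun z hz => by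
    rw [hG, hg]
    simp only
    rw [ENNReal.ofReal_mul (Real.rpow_nonneg hz.le _), ENNReal.ofReal_toReal (hJtop z)]
  have hGl : ∀ y, ∫⁻ z in Ioc 0 y, ENNReal.ofReal (G z) = ∫⁻ z in Ioc 0 y, g z * J z := fun y =>
    setLIntegral_congr_fun measurableSet_Ioc fun z hz => hGof z hz.1
  have hGfin : ∀ y, ∫⁻ z in Ioc 0 y, g z * J z ≠ ⊤ := fun y => by
    refine ne_top_of_le_ne_top (hVtop y) ?_
    rw [hV y]; exact le_add_self
  have hGnn : ∀ y, 0 ≤ᵐ[volume.restrict (Ioc 0 y)] G := fun y => by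
    rw [EventuallyLE, ae_restrict_iff' measurableSet_Ioc]
    exact Eventually.of_forall fun z hz => (hGpos z hz.1).le
  have hGint : ∀ y, IntegrableOn G (Ioc 0 y) := fun y => by
    refine (lintegral_ofReal_ne_top_iff_integrable hGm.aestronglyMeasurable (hGnn y)).1 ?_
    rw [hGl]; exact hGfin y
  have hGii : ∀ a b, 0 ≤ a → a ≤ b → IntervalIntegrable G volume a b := fun a b ha hab => by
    rw [intervalIntegrable_iff_integrableOn_Ioc_of_le hab]
    exact (hGint b).mono_set (Ioc_subset_Ioc_left ha)
  have hv : ∀ y, 0 ≤ y → (V y).toReal = c + ∫ z in (0 : ℝ)..y, G z := fun y hy => by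
    rw [hV y, ENNReal.toReal_add ofReal_ne_top (hGfin y), ENNReal.toReal_ofReal hc.le,
      intervalIntegral.integral_of_le hy,
      integral_eq_lintegral_of_nonneg_ae (hGnn y) hGm.aestronglyMeasurable, hGl]
  have hin : ∀ z, 0 ≤ z →
      ∫ ζ in (0 : ℝ)..z, ζ ^ ((N : ℝ) - 1) * ρ ζ * (V ζ).toReal ^ (1 / m) = (J z).toReal := by
    intro z hz
    rw [intervalIntegral.integral_of_le hz, integral_eq_lintegral_of_nonneg_ae]
    · congr 1
      refine lintegral_congr_ae ?_
      rw [EventuallyEq, ae_restrict_iff' measurableSet_Ioc]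
      filter_upwards [hρpos] with ζ h hζ
      have h1 := mul_pos (Real.rpow_pos_of_pos hζ.1 ((N : ℝ) - 1)) (h hζ.1)
      rw [ENNReal.ofReal_mul h1.le, ENNReal.toReal_rpow, ENNReal.ofReal_toReal]
      exact ENNReal.rpow_ne_top_of_nonneg (by positivity) (hVtop ζ)
    · rw [EventuallyLE, ae_restrict_iff' measurableSet_Ioc]
      filter_upwards [hρpos] with ζ h hζ
      have h1 := mul_pos (Real.rpow_pos_of_pos hζ.1 ((N : ℝ) - 1)) (h hζ.1)
      exact mul_nonneg h1.le (Real.rpow_nonneg ENNReal.toReal_nonneg _)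
    · exact Measurable.aestronglyMeasurable (by fun_prop)
  refine ⟨fun y => (V y).toReal, ?_, ?_, ?_, ?_, ?_⟩
  · intro x hx
    have hx0 : (0 : ℝ) ≤ x := hx
    have h1 : ContinuousOn (fun y => c + ∫ z in (0 : ℝ)..y, G z) (Icc 0 (x + 1)) := by
      refine continuousOn_const.add ?_
      have := intervalIntegral.continuousOn_primitive_interval (μ := volume) (f := G)
        (a := 0) (b := x + 1) ?_
      · rwa [uIcc_of_le (by linarith)] at this
      · rw [uIcc_of_le (by linarith), integrableOn_Icc_iff_integrableOn_Ioc]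
        exact hGint _
    have h2 : ContinuousOn (fun y => (V y).toReal) (Icc 0 (x + 1)) :=
      h1.congr fun y hy => hv y hy.1
    refine (h2 x ⟨hx0, by linarith⟩).mono_of_mem_nhdsWithin ?_
    rw [← Ici_inter_Iic]
    exact inter_mem_nhdsWithin _ (Iic_mem_nhds (by linarith))
  · intro a ha b hb hab
    have ha0 : (0 : ℝ) ≤ a := ha
    have hb0 : (0 : ℝ) ≤ b := hb
    simp only
    rw [hv a ha0, hv b hb0,
      ← intervalIntegral.integral_add_adjacent_intervals (hGii 0 a le_rfl ha0) (hGii a b ha0 hab.le)]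
    have := intervalIntegral.intervalIntegral_pos_of_pos_on (hGii a b ha0 hab.le)
      (fun z hz => hGpos z (ha0.trans_lt hz.1)) hab
    linarith
  · simp only
    rw [hv 0 le_rfl]; simp
  · intro y hy
    have := ENNReal.toReal_mono (hVtop y) (hVc y)
    rwa [ENNReal.toReal_ofReal hc.le] at this
  · intro y hy
    simp only
    rw [hv y hy]
    congr 1
    refine intervalIntegral.integral_congr fun z hz => ?_
    rw [uIcc_of_le hy] at hz
    simp only [hG]
    rw [hin z hz.1]
end

section
/- Let N ≥ 3, m > 1, γ ∈ [0,2), 0 < k ≤ K, and let ρ : (0,∞) → ℝ be measurable with k(1+y)^{−γ} ≤ ρ(y) ≤ K y^{−γ} for a.e. y > 0. Let β > 0 and let V : [0,∞) → ℝ be a continuous nonnegative function satisfying V(y) = β^m + ∫₀^y z^{−(N−1)} ( ∫₀^z ζ^{N−1} ρ(ζ) V(ζ)^{1/m} dζ ) dz for all y ≥ 0. Then limsup_{y→+∞} V(y) / y^{(2−γ)m/(m−1)} ≤ [ (m−1)K / (m(N−γ)(2−γ)) ]^{m/(m−1)}. -/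
open MeasureTheory Metric Filter Set ENNReal

open MeasureTheory Metric Filter Set ENNReal in
/-- **Upper asymptotic bound for the radial elliptic ODE** (Step 2 of the proof of
Proposition 2.7 of Muratori–Petitt):
`limsup_{y→∞} V(y)/y^{(2-γ)m/(m-1)} ≤ [(m-1)K/(m(N-γ)(2-γ))]^{m/(m-1)}`, expressed in the
equivalent form: for every `ε > 0`, eventually in `y`,
`V(y)/y^{(2-γ)m/(m-1)} ≤ [(m-1)K/(m(N-γ)(2-γ))]^{m/(m-1)} + ε`. -/
theorem radial_ode_limsup
    (N : ℕ) (hN : 3 ≤ N) (m γ k K : ℝ)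
    (hm : 1 < m) (hγ0 : 0 ≤ γ) (hγ2 : γ < 2) (hk : 0 < k) (hkK : k ≤ K)
    (ρ : ℝ → ℝ) (hρm : Measurable ρ)
    (hρ : ∀ᵐ y ∂(volume.restrict (Ioi (0 : ℝ))),
      k * (1 + y) ^ (-γ) ≤ ρ y ∧ ρ y ≤ K * y ^ (-γ))
    (β : ℝ) (hβ : 0 < β)
    (V : ℝ → ℝ) (hVc : ContinuousOn V (Ici 0)) (hVnn : ∀ y : ℝ, 0 ≤ y → 0 ≤ V y)
    (hVeq : ∀ y : ℝ, 0 ≤ y → V y = β ^ m +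
      ∫ z in (0 : ℝ)..y, z ^ (-((N : ℝ) - 1)) *
        ∫ ζ in (0 : ℝ)..z, ζ ^ ((N : ℝ) - 1) * ρ ζ * V ζ ^ (1 / m)) :
    ∀ ε : ℝ, 0 < ε → ∀ᶠ y in atTop,
      V y / y ^ ((2 - γ) * m / (m - 1)) ≤
        ((m - 1) * K / (m * ((N : ℝ) - γ) * (2 - γ))) ^ (m / (m - 1)) + ε := by
  have hN3 : (3 : ℝ) ≤ (N : ℝ) := by exact_mod_cast hN
  have hK : 0 < K := lt_of_lt_of_le hk hkK
  have hm0 : 0 < m := by linarith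
  have hm1 : 0 < m - 1 := by linarith
  have hNγ : 0 < (N : ℝ) - γ := by linarith
  have h2γ : 0 < 2 - γ := by linarith
  have him : 0 < 1 / m := by positivity
  -- a.e. bounds
  have hae : ∀ᵐ ζ ∂(volume.restrict (Ioi (0 : ℝ))),
      0 < ζ ∧ 0 ≤ ρ ζ ∧ ρ ζ ≤ K * ζ ^ (-γ) := by
    filter_upwards [hρ, ae_restrict_mem measurableSet_Ioi] with ζ h1 h2
    have h2' : 0 < ζ := h2
    refine ⟨h2', le_trans ?_ h1.1, h1.2⟩
    positivity
  set f : ℝ → ℝ := fun ζ => ζ ^ ((N : ℝ) - 1) * ρ ζ * V ζ ^ (1 / m) with hf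
  set F : ℝ → ℝ := fun z => ∫ ζ in (0 : ℝ)..z, f ζ with hF
  set g : ℝ → ℝ := fun z => z ^ (-((N : ℝ) - 1)) * F z with hg
  have hVeq' : ∀ y : ℝ, 0 ≤ y → V y = β ^ m + ∫ z in (0 : ℝ)..y, g z := hVeq
  have haeb : ∀ b : ℝ, ∀ᵐ ζ ∂(volume.restrict (Ioc (0 : ℝ) b)),
      0 < ζ ∧ 0 ≤ ρ ζ ∧ ρ ζ ≤ K * ζ ^ (-γ) := fun b =>
    ae_restrict_of_ae_restrict_of_subset Ioc_subset_Ioi_self hae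
  have hfnn : ∀ b : ℝ, ∀ᵐ ζ ∂(volume.restrict (Ioc (0 : ℝ) b)), 0 ≤ f ζ := by
    intro b
    filter_upwards [haeb b] with ζ h
    have h1 := h.1
    have h2 := h.2.1
    have h3 := hVnn ζ h1.le
    simp only [hf]
    positivity
  have hfle : ∀ b M : ℝ, (∀ ζ ∈ Ioc (0 : ℝ) b, V ζ ≤ M) →
      ∀ᵐ ζ ∂(volume.restrict (Ioc (0 : ℝ) b)),
        f ζ ≤ (K * M ^ (1 / m)) * ζ ^ ((N : ℝ) - 1 - γ) := by
    intro b M hM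
    filter_upwards [haeb b, ae_restrict_mem measurableSet_Ioc] with ζ h hζ
    have h1 := h.1
    have h3 := hVnn ζ h1.le
    have h4 : V ζ ^ (1 / m) ≤ M ^ (1 / m) := Real.rpow_le_rpow h3 (hM ζ hζ) him.le
    have h5 : ζ ^ ((N : ℝ) - 1 - γ) = ζ ^ ((N : ℝ) - 1) * ζ ^ (-γ) := by
      rw [← Real.rpow_add h1]; ring_nf
    rw [h5]
    calc f ζ = ζ ^ ((N : ℝ) - 1) * (ρ ζ * V ζ ^ (1 / m)) := by simp only [hf]; ring
      _ ≤ ζ ^ ((N : ℝ) - 1) * ((K * ζ ^ (-γ)) * M ^ (1 / m)) := by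
          apply mul_le_mul_of_nonneg_left _ (by positivity)
          exact mul_le_mul h.2.2 h4 (by positivity) (by positivity)
      _ = _ := by ring
  have hrp : ∀ c b : ℝ, IntervalIntegrable
      (fun ζ : ℝ => c * ζ ^ ((N : ℝ) - 1 - γ)) volume 0 b := fun c b =>
    (intervalIntegral.intervalIntegrable_rpow' (by linarith)).const_mul c
  have hbd : ∀ b : ℝ, ∃ M : ℝ, 0 ≤ M ∧ ∀ ζ ∈ Ioc (0 : ℝ) b, V ζ ≤ M := by
    intro b
    obtain ⟨M, hM⟩ := (isCompact_Icc (a := (0 : ℝ)) (b := b)).bddAbove_image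
      (hVc.mono Icc_subset_Ici_self)
    refine ⟨max M 0, le_max_right _ _, fun ζ hζ => le_max_of_le_left ?_⟩
    exact hM ⟨ζ, Ioc_subset_Icc_self hζ, rfl⟩
  have hfint : ∀ b : ℝ, 0 ≤ b → IntervalIntegrable f volume 0 b := by
    intro b hb
    obtain ⟨M, hM0, hM⟩ := hbd b
    refine (hrp (K * M ^ (1 / m)) b).mono_fun' ?_ ?_
    · rw [uIoc_of_le hb]
      have hV1 : AEStronglyMeasurable (fun ζ => V ζ ^ (1 / m))
          (volume.restrict (Ioc (0 : ℝ) b)) := by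
        refine ContinuousOn.aestronglyMeasurable ?_ measurableSet_Ioc
        refine ContinuousOn.rpow_const (hVc.mono fun x hx => hx.1.le) fun x _ => Or.inr him.le
      refine AEStronglyMeasurable.mul ?_ hV1
      exact ((measurable_id.pow_const _).mul hρm).aestronglyMeasurable
    · rw [uIoc_of_le hb]
      filter_upwards [hfnn b, hfle b M hM] with ζ h1 h2
      rwa [Real.norm_of_nonneg h1]
  have hF0 : ∀ z : ℝ, 0 ≤ z → 0 ≤ F z := by
    intro z hz
    simp only [hF]
    rw [intervalIntegral.integral_of_le hz]
    exact integral_nonneg_of_ae (hfnn z)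
  have hFle : ∀ z M : ℝ, 0 ≤ z → (∀ ζ ∈ Ioc (0 : ℝ) z, V ζ ≤ M) →
      F z ≤ K * M ^ (1 / m) * (z ^ ((N : ℝ) - γ) / ((N : ℝ) - γ)) := by
    intro z M hz hM
    have h1 : ∫ ζ in (0 : ℝ)..z, (K * M ^ (1 / m)) * ζ ^ ((N : ℝ) - 1 - γ) =
        K * M ^ (1 / m) * (z ^ ((N : ℝ) - γ) / ((N : ℝ) - γ)) := by
      rw [intervalIntegral.integral_const_mul, integral_rpow (Or.inl (by linarith))]
      have : (N : ℝ) - 1 - γ + 1 = (N : ℝ) - γ := by ring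
      rw [this, Real.zero_rpow hNγ.ne', sub_zero]
    rw [← h1]
    simp only [hF]
    rw [intervalIntegral.integral_of_le hz, intervalIntegral.integral_of_le hz]
    exact integral_mono_ae (hfint z hz).1 (hrp _ z).1 (hfle z M hM)
  have hg0 : ∀ z : ℝ, 0 ≤ z → 0 ≤ g z := fun z hz =>
    mul_nonneg (Real.rpow_nonneg hz _) (hF0 z hz)
  have hgle : ∀ z M : ℝ, 0 < z → (∀ ζ ∈ Ioc (0 : ℝ) z, V ζ ≤ M) →
      g z ≤ (K * M ^ (1 / m) / ((N : ℝ) - γ)) * z ^ (1 - γ) := by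
    intro z M hz hM
    have h1 : z ^ (1 - γ) = z ^ (-((N : ℝ) - 1)) * z ^ ((N : ℝ) - γ) := by
      rw [← Real.rpow_add hz]; ring_nf
    rw [h1]
    calc g z ≤ z ^ (-((N : ℝ) - 1)) *
          (K * M ^ (1 / m) * (z ^ ((N : ℝ) - γ) / ((N : ℝ) - γ))) :=
          mul_le_mul_of_nonneg_left (hFle z M hz.le hM) (Real.rpow_nonneg hz.le _)
      _ = _ := by ring
  have hgc : ContinuousOn g (Ioi 0) := by
    intro z hz
    have hz' : 0 < z := hz
    have h1 := intervalIntegral.continuousOn_primitive_interval' (hfint (z + 1) (by linarith))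
      left_mem_uIcc
    rw [uIcc_of_le (by linarith : (0 : ℝ) ≤ z + 1)] at h1
    have h2 : ContinuousAt F z := h1.continuousAt (Icc_mem_nhds hz' (by linarith))
    exact ((Real.continuousAt_rpow_const z _ (Or.inl hz'.ne')).mul h2).continuousWithinAt
  have hgint : ∀ b : ℝ, 0 ≤ b → IntervalIntegrable g volume 0 b := by
    intro b hb
    obtain ⟨M, hM0, hM⟩ := hbd b
    refine ((intervalIntegral.intervalIntegrable_rpow' (by linarith : -1 < 1 - γ)).const_mul
      (K * M ^ (1 / m) / ((N : ℝ) - γ))).mono_fun' ?_ ?_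
    · rw [uIoc_of_le hb]
      exact (hgc.mono fun x hx => hx.1).aestronglyMeasurable measurableSet_Ioc
    · rw [uIoc_of_le hb]
      filter_upwards [ae_restrict_mem measurableSet_Ioc] with z hz
      rw [Real.norm_of_nonneg (hg0 z hz.1.le)]
      exact hgle z M hz.1 fun ζ hζ => hM ζ ⟨hζ.1, hζ.2.trans hz.2⟩
  have hmono : ∀ a b : ℝ, 0 ≤ a → a ≤ b → V a ≤ V b := by
    intro a b ha hab
    have hb := ha.trans hab
    rw [hVeq' a ha, hVeq' b hb]
    have h1 := intervalIntegral.integral_interval_sub_left (hgint b hb) (hgint a ha)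
    have h2 : 0 ≤ ∫ z in a..b, g z :=
      intervalIntegral.integral_nonneg hab fun u hu => hg0 u (ha.trans hu.1)
    linarith
  have hV0 : V 0 = β ^ m := by
    rw [hVeq' 0 le_rfl, intervalIntegral.integral_same, add_zero]
  have hVpos : ∀ y : ℝ, 0 ≤ y → 0 < V y := by
    intro y hy
    have h1 := hmono 0 y le_rfl hy
    rw [hV0] at h1
    exact lt_of_lt_of_le (Real.rpow_pos_of_pos hβ m) h1
  have hVd : ∀ z : ℝ, 0 < z → HasDerivAt V (g z) z := by
    intro z hz
    have h1 := intervalIntegral.integral_hasDerivAt_right (hgint z hz.le)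
      (hgc.stronglyMeasurableAtFilter isOpen_Ioi z hz) (hgc.continuousAt (Ioi_mem_nhds hz))
    refine (h1.const_add (β ^ m)).congr_of_eventuallyEq ?_
    filter_upwards [Ioi_mem_nhds hz] with y hy
    exact hVeq' y (le_of_lt hy)
  set A : ℝ := (m - 1) * K / (m * ((N : ℝ) - γ) * (2 - γ)) with hA
  have hA0 : 0 < A := by positivity
  set p : ℝ := (m - 1) / m with hp
  have hp0 : 0 < p := by positivity
  have hGd : ∀ z : ℝ, 0 < z → HasDerivAt (fun y => V y ^ p - A * y ^ (2 - γ))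
      (g z * p * V z ^ (p - 1) - A * ((2 - γ) * z ^ (2 - γ - 1))) z := by
    intro z hz
    exact ((hVd z hz).rpow_const (Or.inl (hVpos z hz.le).ne')).sub
      ((Real.hasDerivAt_rpow_const (Or.inl hz.ne')).const_mul A)
  have hanti : AntitoneOn (fun y => V y ^ p - A * y ^ (2 - γ)) (Ici 0) := by
    refine antitoneOn_of_deriv_nonpos (convex_Ici 0) ?_ ?_ ?_
    · refine (hVc.rpow_const fun x _ => Or.inr hp0.le).sub (continuousOn_const.mul ?_)
      exact continuousOn_id.rpow_const fun x _ => Or.inr h2γ.le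
    · rw [interior_Ici]
      exact fun z hz => (hGd z hz).differentiableAt.differentiableWithinAt
    · rw [interior_Ici]
      intro z hz
      have hz' : 0 < z := hz
      rw [(hGd z hz).deriv]
      have h1 := hgle z (V z) hz' fun ζ hζ => hmono ζ z hζ.1.le hζ.2
      have hVz := hVpos z hz'.le
      have h2 : V z ^ (1 / m) * V z ^ (p - 1) = 1 := by
        rw [← Real.rpow_add hVz]
        have : 1 / m + (p - 1) = 0 := by rw [hp]; field_simp; ring
        rw [this, Real.rpow_zero]
      have h3 : (2 : ℝ) - γ - 1 = 1 - γ := by ring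
      rw [h3]
      have h4 : g z * p * V z ^ (p - 1) ≤
          ((K * V z ^ (1 / m) / ((N : ℝ) - γ)) * z ^ (1 - γ)) * p * V z ^ (p - 1) := by
        gcongr
      have h5 : ((K * V z ^ (1 / m) / ((N : ℝ) - γ)) * z ^ (1 - γ)) * p * V z ^ (p - 1) =
          (K / ((N : ℝ) - γ) * p * z ^ (1 - γ)) * (V z ^ (1 / m) * V z ^ (p - 1)) := by ring
      have h6 : A * ((2 - γ) * z ^ (1 - γ)) = K / ((N : ℝ) - γ) * p * z ^ (1 - γ) := by
        rw [hA, hp]; field_simp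
      rw [h5, h2, mul_one] at h4
      rw [h6]
      linarith
  have hkey : ∀ y : ℝ, 0 ≤ y → V y ^ p ≤ V 0 ^ p + A * y ^ (2 - γ) := by
    intro y hy
    have h1 := hanti (mem_Ici.2 le_rfl) (mem_Ici.2 hy) hy
    simp only [Real.zero_rpow h2γ.ne', mul_zero, sub_zero] at h1
    linarith
  intro ε hε
  have hq0 : 0 < m / (m - 1) := by positivity
  have hpq : p * (m / (m - 1)) = 1 := by rw [hp]; field_simp
  have hlim : Tendsto (fun y : ℝ => (V 0 ^ p * y ^ (-(2 - γ)) + A) ^ (m / (m - 1))) atTop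
      (nhds (A ^ (m / (m - 1)))) := by
    have h1 := ((tendsto_rpow_neg_atTop h2γ).const_mul (V 0 ^ p)).add_const A
    rw [mul_zero, zero_add] at h1
    exact h1.rpow_const (Or.inr hq0.le)
  have hev := hlim.eventually (gt_mem_nhds (lt_add_of_pos_right _ hε))
  filter_upwards [hev, eventually_gt_atTop 0] with y hy hy0
  refine le_trans ?_ hy.le
  have hpow : y ^ ((2 - γ) * m / (m - 1)) = (y ^ (2 - γ)) ^ (m / (m - 1)) := by
    rw [← Real.rpow_mul hy0.le]; ring_nf
  have hVy : V y = (V y ^ p) ^ (m / (m - 1)) := by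
    rw [← Real.rpow_mul (hVnn y hy0.le), hpq, Real.rpow_one]
  have hyp : 0 < y ^ (2 - γ) := Real.rpow_pos_of_pos hy0 _
  have hVp : 0 ≤ V y ^ p := Real.rpow_nonneg (hVnn y hy0.le) _
  rw [hpow, hVy, ← Real.div_rpow hVp hyp.le]
  refine Real.rpow_le_rpow (by positivity) ?_ hq0.le
  rw [div_le_iff₀ hyp, add_mul, mul_assoc, ← Real.rpow_add hy0, neg_add_cancel, Real.rpow_zero,
    mul_one]
  exact hkey y hy0.le
end

section
/- Let N ≥ 3, m > 1, γ ∈ [0,2), 0 < k ≤ K, and let ρ : (0,∞) → ℝ be measurable with k(1+y)^{−γ} ≤ ρ(y) ≤ K y^{−γ} for a.e. y > 0. Define F : [0,∞) → ℝ by F(y) = y² for y ∈ [0,1] and F(y) = y^{2−γ} for y > 1. Then there exists a constant c > 0 depending only on N, m, γ, k (and in particular independent of β and ρ) such that for every β > 0, every continuous nonnegative V : [0,∞) → ℝ satisfying V(y) = β^m + ∫₀^y z^{−(N−1)} ( ∫₀^z ζ^{N−1} ρ(ζ) V(ζ)^{1/m} dζ ) dz for all y ≥ 0 obeys the pointwise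 lower bound V(y) ≥ c · F(y)^{m/(m−1)} for all y ≥ 0; in particular liminf_{y→+∞} V(y)/y^{(2−γ)m/(m−1)} ≥ c. -/
open MeasureTheory Metric Filter Set ENNReal

/-- Key estimate: the halving inequality and the bound below by the datum. -/
lemma aux_radial (N : ℕ) (hN : 3 ≤ N) (m γ k K : ℝ)
    (hm : 1 < m) (hγ0 : 0 ≤ γ) (hγ2 : γ < 2) (hk : 0 < k) (hK : k ≤ K)
    (ρ : ℝ → ℝ) (hρ : Measurable ρ)
    (hb : ∀ᵐ y ∂(volume.restrict (Ioi (0 : ℝ))),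
          k * (1 + y) ^ (-γ) ≤ ρ y ∧ ρ y ≤ K * y ^ (-γ))
    (β : ℝ) (V : ℝ → ℝ) (hβ : 0 < β) (hV : ContinuousOn V (Ici 0)) (hV0 : ∀ y : ℝ, 0 ≤ y → 0 ≤ V y)
    (hE : ∀ y : ℝ, 0 ≤ y → V y = β ^ m +
          ∫ z in (0 : ℝ)..y, z ^ (-((N : ℝ) - 1)) *
            ∫ ζ in (0 : ℝ)..z, ζ ^ ((N : ℝ) - 1) * ρ ζ * V ζ ^ (1 / m))
    (y : ℝ) (hy : 0 < y) :
    β ^ m ≤ V y ∧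
    k / 16 * (1 / 2) ^ ((N : ℝ) - 1) * (y ^ 2 * (1 + y) ^ (-γ)) * V (y / 2) ^ (1 / m) ≤ V y := by
  have hN' : (3 : ℝ) ≤ N := by exact_mod_cast hN
  have hm0 : 0 < 1 / m := by positivity
  rw [ae_restrict_iff' measurableSet_Ioi] at hb
  set g : ℝ → ℝ := fun ζ => ζ ^ ((N : ℝ) - 1) * ρ ζ * V ζ ^ (1 / m) with hg
  set I : ℝ → ℝ := fun z => ∫ ζ in (0 : ℝ)..z, g ζ with hI
  set h : ℝ → ℝ := fun z => z ^ (-((N : ℝ) - 1)) * I z with hh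
  have hE' : ∀ y : ℝ, 0 ≤ y → V y = β ^ m + ∫ z in (0 : ℝ)..y, h z := hE
  -- upper bound of V
  obtain ⟨M, hM⟩ := (isCompact_Icc (a := (0:ℝ)) (b := y)).exists_bound_of_continuousOn
    (f := fun x => V x ^ (1 / m))
    ((hV.mono Icc_subset_Ici_self).rpow_const (fun x _ => Or.inr hm0.le))
  have hM0 : 0 ≤ M := (norm_nonneg _).trans (hM 0 ⟨le_rfl, hy.le⟩)
  have hMV : ∀ x, 0 ≤ x → x ≤ y → V x ^ (1 / m) ≤ M := fun x h1 h2 =>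
    (le_abs_self _).trans (hM x ⟨h1, h2⟩)
  have hg0 : ∀ᵐ ζ, 0 < ζ → 0 ≤ g ζ := by
    filter_upwards [hb] with ζ hζ h0
    have h1 : 0 ≤ k * (1 + ζ) ^ (-γ) := by positivity
    have h2 := (hζ h0).1
    have h3 := hV0 ζ h0.le
    have h4 : 0 ≤ ρ ζ := h1.trans h2
    simp only [hg]
    positivity
  have hgb : ∀ᵐ ζ, 0 < ζ → ζ ≤ y → g ζ ≤ K * M * ζ ^ ((N : ℝ) - 1 - γ) := by
    filter_upwards [hb] with ζ hζ h0 hle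
    have h2 := (hζ h0).2
    have h3 := hMV ζ h0.le hle
    have h5 : ζ ^ ((N : ℝ) - 1 - γ) = ζ ^ ((N : ℝ) - 1) * ζ ^ (-γ) := by
      rw [← Real.rpow_add h0]; ring_nf
    have h6 : 0 ≤ K * ζ ^ (-γ) := by
      have : 0 ≤ K := hk.le.trans hK
      positivity
    have h7 : 0 ≤ V ζ ^ (1 / m) := Real.rpow_nonneg (hV0 ζ h0.le) _
    rw [h5]
    calc g ζ ≤ ζ ^ ((N : ℝ) - 1) * (K * ζ ^ (-γ)) * M := by
          simp only [hg]
          gcongr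
      _ = _ := by ring
  have hVm : ∀ b, AEStronglyMeasurable (fun x => V x ^ (1 / m)) (volume.restrict (Ioc 0 b)) := by
    intro b
    refine ContinuousOn.aestronglyMeasurable ?_ measurableSet_Ioc
    exact (hV.mono (fun x hx => hx.1.le)).rpow_const (fun x _ => Or.inr hm0.le)
  have hgi : ∀ z, 0 ≤ z → z ≤ y → IntervalIntegrable g volume 0 z := by
    intro z hz hzy
    have h1 : IntervalIntegrable (fun ζ : ℝ => K * M * ζ ^ ((N : ℝ) - 1 - γ)) volume 0 z :=
      (intervalIntegral.intervalIntegrable_rpow' (by linarith)).const_mul _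
    refine h1.mono_fun ?_ ?_
    · rw [uIoc_of_le hz]
      refine AEStronglyMeasurable.mul ?_ (hVm z)
      exact ((measurable_id.pow_const _).mul hρ).aestronglyMeasurable
    · rw [uIoc_of_le hz]
      rw [Filter.EventuallyLE, ae_restrict_iff' measurableSet_Ioc]
      filter_upwards [hg0, hgb] with ζ h1 h2 h3
      rw [Real.norm_of_nonneg (h1 h3.1)]
      exact (h2 h3.1 (h3.2.trans hzy)).trans (le_abs_self _)
  have hI0 : ∀ z, 0 ≤ z → 0 ≤ I z := by
    intro z hz
    refine intervalIntegral.integral_nonneg_of_ae_restrict hz ?_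
    rw [← Measure.restrict_congr_set (Ioc_ae_eq_Icc (μ := volume)), Filter.EventuallyLE, ae_restrict_iff' measurableSet_Ioc]
    filter_upwards [hg0] with ζ h1 h2
    exact h1 h2.1
  have hIb : ∀ z, 0 < z → z ≤ y → I z ≤ K * M * z ^ ((N : ℝ) - γ) := by
    intro z hz hzy
    have h1 : I z ≤ ∫ ζ in (0:ℝ)..z, K * M * z ^ ((N : ℝ) - 1 - γ) := by
      refine intervalIntegral.integral_mono_ae_restrict hz.le (hgi z hz.le hzy) (by simp) ?_
      rw [← Measure.restrict_congr_set (Ioc_ae_eq_Icc (μ := volume)), Filter.EventuallyLE, ae_restrict_iff' measurableSet_Ioc]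
      filter_upwards [hgb] with ζ h1 h2
      refine (h1 h2.1 (h2.2.trans hzy)).trans ?_
      have : 0 ≤ K := hk.le.trans hK
      gcongr
      · exact h2.1.le
      · linarith
      · exact h2.2
    refine h1.trans (le_of_eq ?_)
    rw [intervalIntegral.integral_const, smul_eq_mul, sub_zero]
    have : z ^ ((N : ℝ) - γ) = z ^ ((N : ℝ) - 1 - γ) * z := by
      nth_rewrite 3 [← Real.rpow_one z]
      rw [← Real.rpow_add hz]; ring_nf
    rw [this]; ring
  have hh0 : ∀ z, 0 ≤ z → 0 ≤ h z := fun z hz => mul_nonneg (Real.rpow_nonneg hz _) (hI0 z hz)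
  have hhi : IntervalIntegrable h volume 0 y := by
    have h1 : IntervalIntegrable (fun ζ : ℝ => K * M * ζ ^ (1 - γ)) volume 0 y :=
      (intervalIntegral.intervalIntegrable_rpow' (by linarith)).const_mul _
    refine h1.mono_fun ?_ ?_
    · rw [uIoc_of_le hy.le]
      refine AEStronglyMeasurable.mul (measurable_id.pow_const _).aestronglyMeasurable ?_
      have h2 : ContinuousOn I (uIcc 0 y) := by
        refine intervalIntegral.continuousOn_primitive_interval ?_
        rw [uIcc_of_le hy.le, integrableOn_Icc_iff_integrableOn_Ioc]
        exact (intervalIntegrable_iff_integrableOn_Ioc_of_le hy.le).1 (hgi y hy.le le_rfl)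
      refine ContinuousOn.aestronglyMeasurable (h2.mono ?_) measurableSet_Ioc
      rw [uIcc_of_le hy.le]; exact Ioc_subset_Icc_self
    · rw [uIoc_of_le hy.le]
      rw [Filter.EventuallyLE, ae_restrict_iff' measurableSet_Ioc]
      refine Filter.Eventually.of_forall fun z hz => ?_
      rw [Real.norm_of_nonneg (hh0 z hz.1.le)]
      refine le_trans ?_ (le_abs_self _)
      have h3 : z ^ (1 - γ) = z ^ (-((N : ℝ) - 1)) * z ^ ((N : ℝ) - γ) := by
        rw [← Real.rpow_add hz.1]; ring_nf
      have h4 := mul_le_mul_of_nonneg_left (hIb z hz.1 hz.2)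
        (Real.rpow_nonneg hz.1.le (-((N : ℝ) - 1)))
      rw [h3]
      refine h4.trans (le_of_eq ?_)
      ring
  have hhs : ∀ a b, 0 ≤ a → a ≤ b → b ≤ y → IntervalIntegrable h volume a b := by
    intro a b ha hab hby
    refine hhi.mono_set ?_
    rw [uIcc_of_le hab, uIcc_of_le hy.le]
    exact Icc_subset_Icc ha hby
  have hgs : ∀ a b, 0 ≤ a → a ≤ b → b ≤ y → IntervalIntegrable g volume a b := by
    intro a b ha hab hby
    refine (hgi y hy.le le_rfl).mono_set ?_
    rw [uIcc_of_le hab, uIcc_of_le hy.le]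
    exact Icc_subset_Icc ha hby
  have hmono : ∀ a b, 0 ≤ a → a ≤ b → b ≤ y → V a ≤ V b := by
    intro a b ha hab hby
    rw [hE' a ha, hE' b (ha.trans hab),
      ← intervalIntegral.integral_add_adjacent_intervals (hhs 0 a le_rfl ha (hab.trans hby))
        (hhs a b ha hab hby)]
    have := intervalIntegral.integral_nonneg hab (μ := volume) (f := h)
      (fun u hu => hh0 u (ha.trans hu.1))
    linarith
  have hV00 : V 0 = β ^ m := by rw [hE' 0 le_rfl]; simp
  refine ⟨hV00 ▸ hmono 0 y le_rfl hy.le le_rfl, ?_⟩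
  set D : ℝ := (y / 2) ^ ((N : ℝ) - 1) * (k * (1 + y) ^ (-γ)) * V (y / 2) ^ (1 / m) with hD
  have hVh : 0 ≤ V (y / 2) := hV0 _ (by positivity)
  have hD0 : 0 ≤ D := by positivity
  have hIl : ∀ z, 3 * y / 4 ≤ z → z ≤ y → y / 4 * D ≤ I z := by
    intro z hz1 hz2
    have e1 : I z = (∫ ζ in (0:ℝ)..(y/2), g ζ) + ∫ ζ in (y/2)..z, g ζ :=
      (intervalIntegral.integral_add_adjacent_intervals
        (hgs 0 (y/2) le_rfl (by linarith) (by linarith))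
        (hgs (y/2) z (by linarith) (by linarith) hz2)).symm
    have e2 : 0 ≤ ∫ ζ in (0:ℝ)..(y/2), g ζ := hI0 (y/2) (by linarith)
    have e3 : ∫ ζ in (y/2)..z, D ≤ ∫ ζ in (y/2)..z, g ζ := by
      refine intervalIntegral.integral_mono_ae_restrict (by linarith) (by simp)
        (hgs (y/2) z (by linarith) (by linarith) hz2) ?_
      rw [Filter.EventuallyLE, ae_restrict_iff' measurableSet_Icc]
      filter_upwards [hb] with ζ h1 h2
      have h0 : 0 < ζ := by linarith [h2.1]
      have h3 := (h1 h0).1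
      have h4 : V (y / 2) ≤ V ζ := hmono _ _ (by linarith) h2.1 (h2.2.trans hz2)
      have h5 : (1 + y) ^ (-γ) ≤ (1 + ζ) ^ (-γ) :=
        Real.rpow_le_rpow_of_nonpos (by linarith) (by linarith [h2.2]) (by linarith)
      have h6 : k * (1 + y) ^ (-γ) ≤ ρ ζ :=
        (mul_le_mul_of_nonneg_left h5 hk.le).trans h3
      have h7 : 0 ≤ ρ ζ := le_trans (by positivity) h6
      have h8 : (y / 2) ^ ((N : ℝ) - 1) ≤ ζ ^ ((N : ℝ) - 1) :=
        Real.rpow_le_rpow (by linarith) h2.1 (by linarith)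
      have h9 : V (y / 2) ^ (1 / m) ≤ V ζ ^ (1 / m) := Real.rpow_le_rpow hVh h4 hm0.le
      simp only [hg, hD]
      gcongr
    rw [intervalIntegral.integral_const, smul_eq_mul] at e3
    have : y / 4 * D ≤ (z - y / 2) * D := by gcongr; linarith
    linarith
  have hfin : ∫ z in (3 * y / 4)..y, y ^ (-((N : ℝ) - 1)) * (y / 4 * D) ≤
      ∫ z in (3 * y / 4)..y, h z := by
    refine intervalIntegral.integral_mono_on (by linarith) (by simp)
      (hhs _ _ (by linarith) (by linarith) le_rfl) ?_
    intro z hz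
    have hz0 : 0 < z := by linarith [hz.1]
    have h1 := hIl z hz.1 hz.2
    have h2 : y ^ (-((N : ℝ) - 1)) ≤ z ^ (-((N : ℝ) - 1)) :=
      Real.rpow_le_rpow_of_nonpos hz0 hz.2 (by linarith)
    simp only [hh]
    gcongr
  rw [intervalIntegral.integral_const, smul_eq_mul] at hfin
  have e1 : ∫ z in (0:ℝ)..y, h z = (∫ z in (0:ℝ)..(3 * y / 4), h z) + ∫ z in (3 * y / 4)..y, h z :=
    (intervalIntegral.integral_add_adjacent_intervals
      (hhs _ _ le_rfl (by linarith) (by linarith))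
      (hhs _ _ (by linarith) (by linarith) le_rfl)).symm
  have e2 : 0 ≤ ∫ z in (0:ℝ)..(3 * y / 4), h z :=
    intervalIntegral.integral_nonneg (by linarith) (fun u hu => hh0 u hu.1)
  have e3 : 0 ≤ β ^ m := by positivity
  have e4 : (y - 3 * y / 4) * (y ^ (-((N : ℝ) - 1)) * (y / 4 * D)) =
      k / 16 * (1 / 2) ^ ((N : ℝ) - 1) * (y ^ 2 * (1 + y) ^ (-γ)) * V (y / 2) ^ (1 / m) := by
    have h1 : (y / 2) ^ ((N : ℝ) - 1) = y ^ ((N : ℝ) - 1) * (1 / 2) ^ ((N : ℝ) - 1) := by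
      rw [← Real.mul_rpow hy.le (by norm_num)]; ring_nf
    have h2 : y ^ (-((N : ℝ) - 1)) * y ^ ((N : ℝ) - 1) = 1 := by
      rw [← Real.rpow_add hy]; simp
    rw [hD, h1]
    linear_combination (k / 16 * (1 / 2) ^ ((N : ℝ) - 1) * (y ^ 2 * (1 + y) ^ (-γ)) *
      V (y / 2) ^ (1 / m)) * h2
  rw [hE' y hy.le]
  linarith

/-- One iteration of the bound. -/
lemma aux_step (m C f v w : ℝ) (f' : ℝ) (hm : 1 < m) (hC : 0 < C) (hf : 0 ≤ f) (hff : f / 4 ≤ f')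
    (hv : (C * (1 / 4) ^ (m / (m - 1) - 1)) ^ (m / (m - 1)) * f' ^ (m / (m - 1)) ≤ v)
    (hw : C * f * v ^ (1 / m) ≤ w) :
    (C * (1 / 4) ^ (m / (m - 1) - 1)) ^ (m / (m - 1)) * f ^ (m / (m - 1)) ≤ w := by
  set p := m / (m - 1) with hp
  have hm1 : 0 < m - 1 := by linarith
  have hp1 : p * (1 / m) = p - 1 := by rw [hp]; field_simp; ring
  have hp0 : 0 < p - 1 := by
    have : p - 1 = 1 / (m - 1) := by rw [hp]; field_simp; ring
    rw [this]; positivity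
  set A := C * (1 / 4) ^ (p - 1) with hA
  have hA0 : 0 < A := by positivity
  have h1 : A ^ (p - 1) * (f / 4) ^ (p - 1) ≤ v ^ (1 / m) := by
    have h2 : (A * (f / 4)) ^ p ≤ v := by
      rw [Real.mul_rpow hA0.le (by positivity)]
      refine le_trans ?_ hv
      gcongr
    have h3 := Real.rpow_le_rpow (by positivity) h2 (z := 1 / m) (by positivity)
    rw [← Real.rpow_mul (by positivity), hp1, Real.mul_rpow hA0.le (by positivity)] at h3
    exact h3
  refine le_trans ?_ hw
  have h4 : C * f * (A ^ (p - 1) * (f / 4) ^ (p - 1)) ≤ C * f * v ^ (1 / m) := by gcongr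
  refine le_trans (le_of_eq ?_) h4
  rcases hf.eq_or_lt with h0 | h0
  · rw [← h0, Real.zero_rpow (by linarith)]; ring
  have e1 : A ^ p = A ^ (p - 1) * A := by
    rw [Real.rpow_sub_one hA0.ne']; field_simp
  have e2 : f ^ p = f ^ (p - 1) * f := by
    rw [Real.rpow_sub_one h0.ne']; field_simp
  have e3 : (f / 4) ^ (p - 1) = f ^ (p - 1) * (1 / 4) ^ (p - 1) := by
    rw [← Real.mul_rpow hf (by norm_num)]; ring_nf
  rw [e1, e2, e3]
  nth_rewrite 2 [hA]
  ring

open MeasureTheory Metric Filter Set ENNReal in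
/-- **Lower asymptotic bound for the radial elliptic ODE** (Step 2 of the proof of
Proposition 2.7 of Muratori–Petitt): there is `c > 0` depending only on `N, m, γ, k`
(in particular independent of `K`, `β` and `ρ`) such that every solution of the radial
integral equation satisfies `V(y) ≥ c F(y)^{m/(m-1)}`, where `F(y) = y²` on `[0,1]` and
`F(y) = y^{2-γ}` for `y > 1`; in particular `liminf_{y→∞} V(y)/y^{(2-γ)m/(m-1)} ≥ c`. -/
theorem radial_ode_lower_bound
    (N : ℕ) (hN : 3 ≤ N) (m γ k : ℝ)
    (hm : 1 < m) (hγ0 : 0 ≤ γ) (hγ2 : γ < 2) (hk : 0 < k) :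
    ∃ c : ℝ, 0 < c ∧
      ∀ K : ℝ, k ≤ K →
      ∀ ρ : ℝ → ℝ, Measurable ρ →
        (∀ᵐ y ∂(volume.restrict (Ioi (0 : ℝ))),
          k * (1 + y) ^ (-γ) ≤ ρ y ∧ ρ y ≤ K * y ^ (-γ)) →
      ∀ β : ℝ, 0 < β →
      ∀ V : ℝ → ℝ, ContinuousOn V (Ici 0) → (∀ y : ℝ, 0 ≤ y → 0 ≤ V y) →
        (∀ y : ℝ, 0 ≤ y → V y = β ^ m +
          ∫ z in (0 : ℝ)..y, z ^ (-((N : ℝ) - 1)) *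
            ∫ ζ in (0 : ℝ)..z, ζ ^ ((N : ℝ) - 1) * ρ ζ * V ζ ^ (1 / m)) →
        (∀ y : ℝ, 0 ≤ y →
          c * (if y ≤ 1 then y ^ (2 : ℝ) else y ^ (2 - γ)) ^ (m / (m - 1)) ≤ V y) ∧
        (∀ᶠ y in atTop, c ≤ V y / y ^ ((2 - γ) * m / (m - 1))) := by
  have hm1 : 0 < m - 1 := by linarith
  set p := m / (m - 1) with hp
  have hp0 : 0 < p := by positivity
  set C := k / 16 * (1 / 2 : ℝ) ^ ((N : ℝ) - 1) with hC
  have hC0 : 0 < C := by positivity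
  set c₀ := (C * (1 / 4) ^ (p - 1)) ^ p with hc₀
  have hc₀0 : 0 < c₀ := by positivity
  refine ⟨c₀ * ((2 : ℝ) ^ (-γ)) ^ p, by positivity, ?_⟩
  intro K hK ρ hρ hb β hβ V hV hV0 hE
  have key := aux_radial N hN m γ k K hm hγ0 hγ2 hk hK ρ hρ hb β V hβ hV hV0 hE
  have hβm : 0 < β ^ m := by positivity
  have iter : ∀ n : ℕ, ∀ y : ℝ, 0 < y →
      c₀ * ((y / 2 ^ n) ^ 2 * (1 + y / 2 ^ n) ^ (-γ)) ^ p ≤ β ^ m →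
      c₀ * (y ^ 2 * (1 + y) ^ (-γ)) ^ p ≤ V y := by
    intro n
    induction n with
    | zero =>
      intro y hy h
      simp only [pow_zero, div_one] at h
      exact h.trans (key y hy).1
    | succ n ih =>
      intro y hy h
      have e : y / 2 ^ (n + 1) = y / 2 / 2 ^ n := by rw [pow_succ]; field_simp
      rw [e] at h
      have h1 := ih (y / 2) (by positivity) h
      refine aux_step m C _ _ _ _ hm hC0 (by positivity) ?_ h1 (key y hy).2
      have h2 : (1 + y) ^ (-γ) ≤ (1 + y / 2) ^ (-γ) :=
        Real.rpow_le_rpow_of_nonpos (by positivity) (by linarith) (by linarith)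
      have : y ^ 2 * (1 + y) ^ (-γ) ≤ y ^ 2 * (1 + y / 2) ^ (-γ) := by gcongr
      linarith
  have low : ∀ y : ℝ, 0 < y → c₀ * (y ^ 2 * (1 + y) ^ (-γ)) ^ p ≤ V y := by
    intro y hy
    have t1 : Tendsto (fun n : ℕ => y / 2 ^ n) atTop (nhds 0) :=
      tendsto_const_nhds.div_atTop (tendsto_pow_atTop_atTop_of_one_lt (by norm_num))
    have t2 : ContinuousAt (fun z : ℝ => c₀ * (z ^ 2 * (1 + z) ^ (-γ)) ^ p) 0 := by
      refine ContinuousAt.mul continuousAt_const (ContinuousAt.rpow_const ?_ (Or.inr hp0.le))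
      refine ContinuousAt.mul (by fun_prop) (ContinuousAt.rpow_const (by fun_prop) ?_)
      left; norm_num
    have t3 := t2.tendsto.comp t1
    have e : c₀ * ((0 : ℝ) ^ 2 * (1 + 0) ^ (-γ)) ^ p = 0 := by
      simp [Real.zero_rpow hp0.ne']
    simp only [e] at t3
    obtain ⟨n, hn⟩ := (t3.eventually (gt_mem_nhds hβm)).exists
    exact iter n y hy hn.le
  have main : ∀ y : ℝ, 0 ≤ y →
      c₀ * ((2 : ℝ) ^ (-γ)) ^ p * (if y ≤ 1 then y ^ (2 : ℝ) else y ^ (2 - γ)) ^ p ≤ V y := by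
    intro y hy
    rcases hy.eq_or_lt with h0 | h0
    · rw [← h0]
      simpa [Real.zero_rpow hp0.ne'] using hV0 0 le_rfl
    refine le_trans ?_ (low y h0)
    have hF : 0 ≤ (if y ≤ 1 then y ^ (2 : ℝ) else y ^ (2 - γ)) := by split_ifs <;> positivity
    rw [mul_assoc, ← Real.mul_rpow (by positivity) hF]
    refine mul_le_mul_of_nonneg_left (Real.rpow_le_rpow (by positivity) ?_ hp0.le) hc₀0.le
    split_ifs with h1
    · have : (2 : ℝ) ^ (-γ) ≤ (1 + y) ^ (-γ) :=
        Real.rpow_le_rpow_of_nonpos (by linarith) (by linarith) (by linarith)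
      rw [Real.rpow_two, mul_comm]
      gcongr
    · push Not at h1
      have : (2 * y) ^ (-γ) ≤ (1 + y) ^ (-γ) :=
        Real.rpow_le_rpow_of_nonpos (by linarith) (by linarith) (by linarith)
      rw [Real.mul_rpow (by norm_num) hy] at this
      rw [sub_eq_add_neg, Real.rpow_add h0, Real.rpow_two]
      calc (2:ℝ) ^ (-γ) * (y ^ 2 * y ^ (-γ)) = y ^ 2 * (2 ^ (-γ) * y ^ (-γ)) := by ring
        _ ≤ _ := by gcongr
  refine ⟨main, ?_⟩
  filter_upwards [eventually_gt_atTop 1] with y hy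
  have hy0 : 0 < y := by linarith
  have h := main y hy0.le
  rw [if_neg (not_le.2 hy), ← Real.rpow_mul hy0.le, hp, ← mul_div_assoc, ← hp] at h
  rwa [le_div_iff₀ (by positivity)]
end

section
/- Let N ≥ 3, m > 1, γ ∈ [0,2), 0 < k ≤ K, and let ρ : (0,∞) → ℝ be measurable with k(1+y)^{−γ} ≤ ρ(y) ≤ K y^{−γ} for a.e. y > 0. Let 0 < β₁ < β₂ and let V₁, V₂ : [0,∞) → ℝ be continuous nonnegative functions satisfying respectively Vᵢ(y) = βᵢ^m + ∫₀^y z^{−(N−1)} ( ∫₀^z ζ^{N−1} ρ(ζ) Vᵢ(ζ)^{1/m} dζ ) dz for all y ≥ 0 (i = 1,2). Then V₁(y) < V₂(y) for all y ≥ 0. -/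
open MeasureTheory Metric Filter Set ENNReal

open MeasureTheory Metric Filter Set ENNReal in
theorem rod_aux (N : ℕ) (hN : 3 ≤ N) (m γ k K : ℝ)
    (hm : 1 < m) (hγ2 : γ < 2) (hk : 0 < k) (hkK : k ≤ K)
    (ρ : ℝ → ℝ) (hρm : Measurable ρ)
    (hρ : ∀ᵐ y ∂(volume.restrict (Ioi (0 : ℝ))),
      k * (1 + y) ^ (-γ) ≤ ρ y ∧ ρ y ≤ K * y ^ (-γ))
    (V : ℝ → ℝ) (hVc : ContinuousOn V (Ici 0)) (hVnn : ∀ y : ℝ, 0 ≤ y → 0 ≤ V y)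
    (R : ℝ) (hR : 0 ≤ R) :
    IntervalIntegrable (fun ζ : ℝ => ζ ^ ((N : ℝ) - 1) * ρ ζ * V ζ ^ (1 / m)) volume 0 R ∧
    IntervalIntegrable (fun z : ℝ => z ^ (-((N : ℝ) - 1)) *
        ∫ ζ in (0 : ℝ)..z, ζ ^ ((N : ℝ) - 1) * ρ ζ * V ζ ^ (1 / m)) volume 0 R := by
  have hN' : (3 : ℝ) ≤ N := by exact_mod_cast hN
  have hK : 0 < K := hk.trans_le hkK
  have hgc : ContinuousOn (fun ζ : ℝ => V ζ ^ (1 / m)) (Ici 0) :=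
    hVc.rpow_const (fun x _ => Or.inr (by positivity))
  obtain ⟨M, hM⟩ := (isCompact_Icc (a := (0 : ℝ)) (b := R)).exists_bound_of_continuousOn
    (hgc.mono Icc_subset_Ici_self)
  have hM0 : 0 ≤ M := (norm_nonneg _).trans (hM 0 ⟨le_rfl, hR⟩)
  have hae : ∀ᵐ ζ : ℝ, ζ ∈ Ioc 0 R →
      ‖ζ ^ ((N : ℝ) - 1) * ρ ζ * V ζ ^ (1 / m)‖ ≤ K * M * ζ ^ ((N : ℝ) - 1 - γ) := by
    rw [ae_restrict_iff' measurableSet_Ioi] at hρ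
    filter_upwards [hρ] with ζ h hζ
    obtain ⟨h1, h2⟩ := h hζ.1
    have hζ0 : 0 < ζ := hζ.1
    have hρ0 : 0 ≤ ρ ζ := le_trans (by positivity) h1
    have h3 := hM ζ ⟨hζ.1.le, hζ.2⟩
    rw [norm_mul, norm_mul, Real.norm_of_nonneg hρ0,
      Real.norm_of_nonneg (by positivity : 0 ≤ ζ ^ ((N : ℝ) - 1)),
      sub_eq_add_neg ((N : ℝ) - 1) γ, Real.rpow_add hζ0]
    calc ζ ^ ((N : ℝ) - 1) * ρ ζ * ‖V ζ ^ (1 / m)‖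
        ≤ ζ ^ ((N : ℝ) - 1) * (K * ζ ^ (-γ)) * M := by gcongr
      _ = _ := by ring
  have hpow : ∀ z : ℝ, IntervalIntegrable
      (fun ζ : ℝ => K * M * ζ ^ ((N : ℝ) - 1 - γ)) volume 0 z := fun z =>
    (intervalIntegral.intervalIntegrable_rpow' (by linarith)).const_mul _
  have hin : IntervalIntegrable
      (fun ζ : ℝ => ζ ^ ((N : ℝ) - 1) * ρ ζ * V ζ ^ (1 / m)) volume 0 R := by
    refine (hpow R).mono_fun' ?_ ?_
    · rw [uIoc_of_le hR]
      refine AEStronglyMeasurable.mul ?_ ?_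
      · exact (by fun_prop : Measurable fun ζ : ℝ => ζ ^ ((N : ℝ) - 1) * ρ ζ).aestronglyMeasurable
      · exact (hgc.mono (fun x hx => hx.1.le)).aestronglyMeasurable measurableSet_Ioc
    · rw [uIoc_of_le hR]
      exact (ae_restrict_iff' measurableSet_Ioc).2 hae
  refine ⟨hin, ?_⟩
  have hbound : IntervalIntegrable
      (fun z : ℝ => K * M / ((N : ℝ) - γ) * z ^ (1 - γ)) volume 0 R :=
    (intervalIntegral.intervalIntegrable_rpow' (by linarith)).const_mul _
  refine hbound.mono_fun' ?_ ?_
  · rw [uIoc_of_le hR]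
    refine AEStronglyMeasurable.mul ?_ ?_
    · exact (by fun_prop : Measurable fun z : ℝ => z ^ (-((N : ℝ) - 1))).aestronglyMeasurable
    · have := intervalIntegral.continuousOn_primitive_interval' hin (a := 0) (by simp)
      rw [uIcc_of_le hR] at this
      exact (this.mono Ioc_subset_Icc_self).aestronglyMeasurable measurableSet_Ioc
  · rw [uIoc_of_le hR]
    refine (ae_restrict_iff' measurableSet_Ioc).2 (Eventually.of_forall fun z hz => ?_)
    have hz0 : 0 < z := hz.1
    have h1 : ‖∫ ζ in (0 : ℝ)..z, ζ ^ ((N : ℝ) - 1) * ρ ζ * V ζ ^ (1 / m)‖ ≤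
        ∫ ζ in (0 : ℝ)..z, K * M * ζ ^ ((N : ℝ) - 1 - γ) := by
      refine intervalIntegral.norm_integral_le_of_norm_le hz0.le ?_ (hpow z)
      filter_upwards [hae] with ζ h hζ
      exact h ⟨hζ.1, hζ.2.trans hz.2⟩
    rw [intervalIntegral.integral_const_mul, integral_rpow (Or.inl (by linarith)),
      Real.zero_rpow (by linarith), sub_zero] at h1
    have e : (N : ℝ) - 1 - γ + 1 = N - γ := by ring
    rw [e] at h1
    beta_reduce
    rw [norm_mul, Real.norm_of_nonneg (by positivity : 0 ≤ z ^ (-((N : ℝ) - 1)))]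
    calc z ^ (-((N : ℝ) - 1)) * _ ≤ z ^ (-((N : ℝ) - 1)) * _ :=
          mul_le_mul_of_nonneg_left h1 (by positivity)
      _ = K * M / ((N : ℝ) - γ) * (z ^ (-((N : ℝ) - 1)) * z ^ ((N : ℝ) - γ)) := by ring
      _ = _ := by rw [← Real.rpow_add hz0]; congr 2; ring

open MeasureTheory Metric Filter Set ENNReal in
/-- **Ordering principle for the radial elliptic ODE** (Step 3 of the proof of
Proposition 2.7 of Muratori–Petitt): solutions of the radial integral equation with
ordered initial values `β₁ < β₂` are strictly ordered: `V₁ < V₂` everywhere. -/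
theorem radial_ode_ordering
    (N : ℕ) (hN : 3 ≤ N) (m γ k K : ℝ)
    (hm : 1 < m) (hγ0 : 0 ≤ γ) (hγ2 : γ < 2) (hk : 0 < k) (hkK : k ≤ K)
    (ρ : ℝ → ℝ) (hρm : Measurable ρ)
    (hρ : ∀ᵐ y ∂(volume.restrict (Ioi (0 : ℝ))),
      k * (1 + y) ^ (-γ) ≤ ρ y ∧ ρ y ≤ K * y ^ (-γ))
    (β₁ β₂ : ℝ) (hβ₁ : 0 < β₁) (hβ : β₁ < β₂)
    (V₁ V₂ : ℝ → ℝ)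
    (hV₁c : ContinuousOn V₁ (Ici 0)) (hV₁nn : ∀ y : ℝ, 0 ≤ y → 0 ≤ V₁ y)
    (hV₂c : ContinuousOn V₂ (Ici 0)) (hV₂nn : ∀ y : ℝ, 0 ≤ y → 0 ≤ V₂ y)
    (hV₁eq : ∀ y : ℝ, 0 ≤ y → V₁ y = β₁ ^ m +
      ∫ z in (0 : ℝ)..y, z ^ (-((N : ℝ) - 1)) *
        ∫ ζ in (0 : ℝ)..z, ζ ^ ((N : ℝ) - 1) * ρ ζ * V₁ ζ ^ (1 / m))
    (hV₂eq : ∀ y : ℝ, 0 ≤ y → V₂ y = β₂ ^ m +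
      ∫ z in (0 : ℝ)..y, z ^ (-((N : ℝ) - 1)) *
        ∫ ζ in (0 : ℝ)..z, ζ ^ ((N : ℝ) - 1) * ρ ζ * V₂ ζ ^ (1 / m)) :
    ∀ y : ℝ, 0 ≤ y → V₁ y < V₂ y := by
  by_contra hcon
  push Not at hcon
  obtain ⟨y₁, hy₁, hle₁⟩ := hcon
  set S : Set ℝ := {y ∈ Ici (0 : ℝ) | V₂ y ≤ V₁ y} with hS
  have hScl : IsClosed S := isClosed_Ici.isClosed_le hV₂c hV₁c
  have hSne : S.Nonempty := ⟨y₁, hy₁, hle₁⟩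
  have hSbd : BddBelow S := ⟨0, fun y hy => hy.1⟩
  have hmem := hScl.csInf_mem hSne hSbd
  set y₀ := sInf S with hy₀
  obtain ⟨hy0, hle⟩ := hmem
  have hy0 : 0 ≤ y₀ := hy0
  have hlt : ∀ y, 0 ≤ y → y < y₀ → V₁ y < V₂ y := by
    intro y h0 h1
    by_contra h
    exact absurd (csInf_le hSbd ⟨h0, not_lt.1 h⟩) (not_le.2 h1)
  have a1 := rod_aux N hN m γ k K hm hγ2 hk hkK ρ hρm hρ V₁ hV₁c hV₁nn
  have a2 := rod_aux N hN m γ k K hm hγ2 hk hkK ρ hρm hρ V₂ hV₂c hV₂nn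
  have hpow : β₁ ^ m < β₂ ^ m := Real.rpow_lt_rpow hβ₁.le hβ (by linarith)
  rw [hV₁eq y₀ hy0, hV₂eq y₀ hy0] at hle
  have hmono : (∫ z in (0 : ℝ)..y₀, z ^ (-((N : ℝ) - 1)) *
        ∫ ζ in (0 : ℝ)..z, ζ ^ ((N : ℝ) - 1) * ρ ζ * V₁ ζ ^ (1 / m)) ≤
      ∫ z in (0 : ℝ)..y₀, z ^ (-((N : ℝ) - 1)) *
        ∫ ζ in (0 : ℝ)..z, ζ ^ ((N : ℝ) - 1) * ρ ζ * V₂ ζ ^ (1 / m) := by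
    refine intervalIntegral.integral_mono_on_of_le_Ioo hy0 (a1 y₀ hy0).2 (a2 y₀ hy0).2 ?_
    intro z hz
    have hz0 : 0 < z := hz.1
    refine mul_le_mul_of_nonneg_left ?_ (by positivity)
    refine intervalIntegral.integral_mono_ae_restrict hz0.le (a1 z hz0.le).1 (a2 z hz0.le).1 ?_
    have h0 : ∀ᵐ ζ ∂volume.restrict (Icc 0 z),
      k * (1 + ζ) ^ (-γ) ≤ ρ ζ ∧ ρ ζ ≤ K * ζ ^ (-γ) := by
      rw [← restrict_Ioc_eq_restrict_Icc]
      exact ae_restrict_of_ae_restrict_of_subset (fun x hx => hx.1) hρ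
    filter_upwards [h0, ae_restrict_mem measurableSet_Icc] with ζ h hζ
    have hζ0 : 0 ≤ ζ := hζ.1
    have hρ0 : 0 ≤ ρ ζ := le_trans (by positivity) h.1
    refine mul_le_mul_of_nonneg_left ?_ (by positivity)
    exact Real.rpow_le_rpow (hV₁nn ζ hζ0) (hlt ζ hζ0 (hζ.2.trans_lt hz.2)).le (by positivity)
  linarith
end

section
/- Let N ≥ 3, m > 1, γ ∈ [0,2), 0 < k ≤ K, let ρ satisfy the weight condition, and let α > (2−γ)/(2(m−1)) + (N−γ)/2. Then there exists a constant E > 0 depending only on N, m, γ, α such that for every f ∈ X: ∫_{ℝᴺ} |f(x)| (1+|x|²)^{−α} ρ(x) dx ≤ E ‖f‖_{1,1}. In particular X is continuously embedded in L¹(Φ_α). -/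
open MeasureTheory Metric Filter Set ENNReal

open MeasureTheory Metric Filter Set ENNReal in
/-- **Continuous embedding `X ↪ L¹(Φ_α)`** (Proposition A.1(1) of Muratori–Petitt): for
`α > (2-γ)/(2(m-1)) + (N-γ)/2` there is `E > 0` depending only on `N, m, γ, α` such that
`∫ |f| Φ_α ρ dx ≤ E ‖f‖_{1,1}` for every `f ∈ X`. -/
theorem embedding_X_L1Phi
    (N : ℕ) (hN : 3 ≤ N) (m γ α : ℝ)
    (hm : 1 < m) (hγ0 : 0 ≤ γ) (hγ2 : γ < 2)
    (hα : (2 - γ) / (2 * (m - 1)) + ((N : ℝ) - γ) / 2 < α) :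
    ∃ E : ℝ, 0 < E ∧
      ∀ k K : ℝ, 0 < k → k ≤ K →
      ∀ ρ : Euc N → ℝ, WeightCond N γ k K ρ →
      ∀ f : Euc N → ℝ, memX ρ m γ f →
        ∫⁻ x : Euc N, ENNReal.ofReal (|f x| * (1 + ‖x‖ ^ 2) ^ (-α) * ρ x) ≤
          ENNReal.ofReal (E * wnorm1 ρ m γ 1 f) := by
  classical
  obtain ⟨s, hs⟩ : ∃ s : ℝ, s = (2 - γ) / (m - 1) + (N : ℝ) - γ := ⟨_, rfl⟩
  have hm1 : 0 < m - 1 := by linarith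
  have hsα : s < 2 * α := by
    have : (2 - γ) / (2 * (m - 1)) = ((2 - γ) / (m - 1)) / 2 := by
      field_simp
    rw [this] at hα
    linarith
  have hN' : (3 : ℝ) ≤ N := by exact_mod_cast hN
  have hspos : 0 < s := by
    have : 0 < (2 - γ) / (m - 1) := div_pos (by linarith) hm1
    linarith
  have hα0 : 0 < α := by linarith
  obtain ⟨q, hq⟩ : ∃ q : ℝ, q = (2 : ℝ) ^ (s - 2 * α) := ⟨_, rfl⟩
  have hq0 : 0 < q := by rw [hq]; positivity
  have hq1 : q < 1 := by
    rw [hq]; exact Real.rpow_lt_one_of_one_lt_of_neg (by norm_num) (by linarith)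
  have h1q : 0 < 1 - q := by linarith
  refine ⟨(4 : ℝ) ^ α * (1 - q)⁻¹, by positivity, ?_⟩
  intro k K hk hkK ρ hρ f hf
  obtain ⟨W, hW⟩ : ∃ W : ℝ, W = wnorm1 ρ m γ 1 f := ⟨_, rfl⟩
  rw [← hW]
  have hρ0 : ∀ᵐ x : Euc N ∂volume, 0 ≤ ρ x := by
    filter_upwards [hρ.2] with x hx
    exact le_trans (by positivity) hx.1
  obtain ⟨g, hg⟩ : ∃ g : Euc N → ℝ≥0∞, g = fun x => ENNReal.ofReal (|f x| * ρ x) := ⟨_, rfl⟩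
  have hInt : ∀ R : ℝ, 1 ≤ R → ∫ x in ball (0 : Euc N) R, |f x| * ρ x ≤ R ^ s * W := by
    intro R hR
    have h1 : R ^ (-((2 - γ) / (m - 1)) - (N : ℝ) + γ) *
        ∫ x in ball (0 : Euc N) R, |f x| * ρ x ≤ W := by
      rw [hW]
      exact le_csSup hf.2 ⟨R, hR, rfl⟩
    have he : -((2 - γ) / (m - 1)) - (N : ℝ) + γ = -s := by rw [hs]; ring
    have hR0 : 0 < R := by linarith
    rw [he, Real.rpow_neg hR0.le] at h1
    have hRs : 0 < R ^ s := Real.rpow_pos_of_pos hR0 s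
    rwa [inv_mul_le_iff₀ hRs] at h1
  have hW0 : 0 ≤ W := by
    have h1 := hInt 1 le_rfl
    rw [Real.one_rpow, one_mul] at h1
    refine le_trans (integral_nonneg_of_ae ?_) h1
    filter_upwards [ae_restrict_of_ae hρ0] with x hx
    exact mul_nonneg (abs_nonneg _) hx
  have hLInt : ∀ n : ℕ, ∫⁻ x in ball (0 : Euc N) (2 ^ n), g x ≤
      ENNReal.ofReal (((2 : ℝ) ^ n) ^ s * W) := by
    intro n
    rw [hg, ← ofReal_integral_eq_lintegral_ofReal (hf.1 (2 ^ n) (by positivity))]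
    · exact ENNReal.ofReal_le_ofReal (hInt _ (one_le_pow₀ (by norm_num)))
    · filter_upwards [ae_restrict_of_ae hρ0] with x hx
      exact mul_nonneg (abs_nonneg _) hx
  obtain ⟨c, hc⟩ : ∃ c : ℕ → ℝ, c = fun n => (4 : ℝ) ^ α * ((2 : ℝ) ^ (-(2 * α))) ^ n := ⟨_, rfl⟩
  have hc0 : ∀ n, 0 ≤ c n := by intro n; rw [hc]; positivity
  have hpt : ∀ x : Euc N, ENNReal.ofReal (|f x| * (1 + ‖x‖ ^ 2) ^ (-α) * ρ x) ≤
      ∑' n : ℕ, (ball (0 : Euc N) (2 ^ n)).indicator (fun y => ENNReal.ofReal (c n) * g y) x := by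
    intro x
    have hex : ∃ n : ℕ, ‖x‖ < 2 ^ n := pow_unbounded_of_one_lt _ (by norm_num)
    obtain ⟨n, hn⟩ : ∃ n, n = Nat.find hex := ⟨_, rfl⟩
    have hxn : ‖x‖ < 2 ^ n := by rw [hn]; exact Nat.find_spec hex
    have hlow : (4 : ℝ) ^ n / 4 ≤ 1 + ‖x‖ ^ 2 := by
      rcases Nat.eq_zero_or_pos n with h0 | h0
      · rw [h0]; have := sq_nonneg ‖x‖; norm_num; linarith
      · obtain ⟨j, rfl⟩ : ∃ j, n = j + 1 := ⟨n - 1, by omega⟩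
        have hj : ¬ ‖x‖ < 2 ^ j := Nat.find_min hex (by omega)
        have hj' : (2 : ℝ) ^ j ≤ ‖x‖ := not_lt.mp hj
        have h2 : ((2 : ℝ) ^ j) ^ 2 ≤ ‖x‖ ^ 2 := by gcongr
        have h4 : ((2 : ℝ) ^ j) ^ 2 = 4 ^ j := by rw [← pow_mul, mul_comm, pow_mul]; norm_num
        rw [pow_succ]; linarith
    have hcn : (1 + ‖x‖ ^ 2) ^ (-α) ≤ c n := by
      have h1 : (1 + ‖x‖ ^ 2) ^ (-α) ≤ ((4 : ℝ) ^ n / 4) ^ (-α) :=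
        Real.rpow_le_rpow_of_nonpos (by positivity) hlow (by linarith)
      refine h1.trans (le_of_eq ?_)
      rw [hc]
      have e1 : (2 : ℝ) ^ (-(2 * α)) = (4 : ℝ) ^ (-α) := by
        rw [show -(2 * α) = (2 : ℝ) * (-α) by ring, Real.rpow_mul (by norm_num)]
        norm_num
      simp only [e1]
      rw [Real.div_rpow (by positivity) (by norm_num), Real.rpow_neg (by norm_num : (0:ℝ) ≤ 4),
        ← Real.rpow_natCast, ← Real.rpow_natCast, ← Real.rpow_neg (by norm_num : (0:ℝ) ≤ 4),
        ← Real.rpow_mul (by norm_num), ← Real.rpow_mul (by norm_num),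
        Real.rpow_neg (by norm_num : (0:ℝ) ≤ 4) α, div_inv_eq_mul, mul_comm, mul_comm (-α)]
    have hle : ENNReal.ofReal (|f x| * (1 + ‖x‖ ^ 2) ^ (-α) * ρ x) ≤
        ENNReal.ofReal (c n) * g x := by
      rw [show |f x| * (1 + ‖x‖ ^ 2) ^ (-α) * ρ x = (1 + ‖x‖ ^ 2) ^ (-α) * (|f x| * ρ x) by ring,
        ENNReal.ofReal_mul (by positivity), hg]
      gcongr
    refine hle.trans ?_
    refine le_trans (le_of_eq ?_) (ENNReal.le_tsum n)
    rw [indicator_of_mem]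
    simpa using hxn
  have hgm : ∀ n : ℕ, AEMeasurable g (volume.restrict (ball (0 : Euc N) (2 ^ n))) := by
    intro n
    rw [hg]
    exact (hf.1 (2 ^ n) (by positivity)).aestronglyMeasurable.aemeasurable.ennreal_ofReal
  have hsum : HasSum (fun n : ℕ => (4 : ℝ) ^ α * W * q ^ n) ((4 : ℝ) ^ α * W * (1 - q)⁻¹) :=
    (hasSum_geometric_of_lt_one hq0.le hq1).mul_left _
  calc ∫⁻ x : Euc N, ENNReal.ofReal (|f x| * (1 + ‖x‖ ^ 2) ^ (-α) * ρ x)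
      ≤ ∫⁻ x : Euc N, ∑' n : ℕ,
        (ball (0 : Euc N) (2 ^ n)).indicator (fun y => ENNReal.ofReal (c n) * g y) x :=
        lintegral_mono hpt
    _ = ∑' n : ℕ, ∫⁻ x : Euc N,
        (ball (0 : Euc N) (2 ^ n)).indicator (fun y => ENNReal.ofReal (c n) * g y) x :=
        lintegral_tsum fun n => by
          rw [aemeasurable_indicator_iff measurableSet_ball]
          exact (hgm n).const_mul _
    _ ≤ ∑' n : ℕ, ENNReal.ofReal ((4 : ℝ) ^ α * W * q ^ n) := by
        refine ENNReal.tsum_le_tsum fun n => ?_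
        rw [lintegral_indicator measurableSet_ball, lintegral_const_mul' _ _ ENNReal.ofReal_ne_top]
        refine (mul_le_mul_right (hLInt n) _).trans (le_of_eq ?_)
        rw [← ENNReal.ofReal_mul (hc0 n)]
        congr 1
        have e2 : ((2 : ℝ) ^ n) ^ s = ((2 : ℝ) ^ s) ^ n := by
          rw [← Real.rpow_natCast, ← Real.rpow_natCast, ← Real.rpow_mul (by norm_num),
            ← Real.rpow_mul (by norm_num), mul_comm]
        rw [hc, hq, e2, sub_eq_add_neg, Real.rpow_add (by norm_num), mul_pow]
        ring
    _ = ENNReal.ofReal ((4 : ℝ) ^ α * (1 - q)⁻¹ * W) := by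
        rw [← ENNReal.ofReal_tsum_of_nonneg (fun n => by positivity) hsum.summable, hsum.tsum_eq]
        congr 1
        ring
end

section
/- Let N ≥ 3, γ ∈ [0,2), K > 0, and let ρ : ℝᴺ → ℝ be measurable with 0 ≤ ρ(x) ≤ K|x|^{−γ} for a.e. x ∈ ℝᴺ. Then there exists a constant C_S > 0 depending only on N, γ, K such that for every f ∈ C_c^∞(ℝᴺ): ( ∫_{ℝᴺ} |f(x)|^{2(N−γ)/(N−2)} ρ(x) dx )^{(N−2)/(N−γ)} ≤ C_S ∫_{ℝᴺ} |∇f(x)|² dx. -/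
open MeasureTheory Metric Filter Set ENNReal

lemma hardy_pointwise_div {N : ℕ} {ε : ℝ} (hε : 0 < ε) (x : Euc N) (i : Fin N) :
    fderiv ℝ (fun y : Euc N => y i * (‖y‖ ^ 2 + ε)⁻¹) x (EuclideanSpace.single i 1)
      = (‖x‖ ^ 2 + ε)⁻¹ - 2 * (x i) ^ 2 * ((‖x‖ ^ 2 + ε)⁻¹) ^ 2 := by
  have h0 : ‖x‖ ^ 2 + ε ≠ 0 := by positivity
  have h1 : HasFDerivAt (fun y : Euc N => y i) (EuclideanSpace.proj i : Euc N →L[ℝ] ℝ) x :=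
    (EuclideanSpace.proj i : Euc N →L[ℝ] ℝ).hasFDerivAt
  have h2 : HasFDerivAt (fun y : Euc N => ‖y‖ ^ 2 + ε) (2 • (innerSL ℝ x)) x :=
    ((hasStrictFDerivAt_norm_sq x).hasFDerivAt).add_const ε
  have h3 := h1.mul ((hasDerivAt_inv h0).comp_hasFDerivAt x h2)
  have h4 := h3.fderiv
  simp only [Function.comp_def] at h4
  erw [h4]
  simp [PiLp.inner_apply]
  field_simp
  ring

lemma integrable_grad_sq {N : ℕ} (f : Euc N → ℝ)
    (hf : ContDiff ℝ (⊤ : ℕ∞) f) (hc : HasCompactSupport f) :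
    Integrable (fun x => ‖fderiv ℝ f x‖ ^ 2) := by
  have hf1 : ContDiff ℝ 1 f := hf.of_le (by exact_mod_cast le_top)
  have hf'c : Continuous (fun x => ‖fderiv ℝ f x‖) := (hf1.continuous_fderiv one_ne_zero).norm
  have hc' : HasCompactSupport (fun x => ‖fderiv ℝ f x‖) := (hc.fderiv ℝ).norm
  have h : HasCompactSupport (fun x => ‖fderiv ℝ f x‖ * ‖fderiv ℝ f x‖) := hc'.mul_left
  have h2 := (hf'c.mul hf'c).integrable_of_hasCompactSupport (μ := volume) h
  refine h2.congr (Eventually.of_forall fun x => ?_)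
  simp [pow_two]

set_option maxHeartbeats 1000000 in
lemma hardy_eps {N : ℕ} (hN : 3 ≤ N) {ε : ℝ} (hε : 0 < ε) (f : Euc N → ℝ)
    (hf : ContDiff ℝ (⊤ : ℕ∞) f) (hc : HasCompactSupport f) :
    ∫ x, f x ^ 2 * (‖x‖ ^ 2 + ε)⁻¹ ≤ (4 / ((N : ℝ) - 2) ^ 2) * ∫ x, ‖fderiv ℝ f x‖ ^ 2 := by
  have hN' : (0 : ℝ) < (N : ℝ) - 2 := by
    have : (3 : ℝ) ≤ N := by exact_mod_cast hN
    linarith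
  have hf1 : ContDiff ℝ 1 f := hf.of_le (by exact_mod_cast le_top)
  have hfc : Continuous f := hf1.continuous
  have hfd : Differentiable ℝ f := hf1.differentiable one_ne_zero
  have hf'c : Continuous (fderiv ℝ f) := hf1.continuous_fderiv one_ne_zero
  have hc' : HasCompactSupport (fderiv ℝ f) := hc.fderiv ℝ
  have hpos : ∀ x : Euc N, 0 < ‖x‖ ^ 2 + ε := fun x => by positivity
  have hwc : Continuous (fun x : Euc N => (‖x‖ ^ 2 + ε)⁻¹) :=
    Continuous.inv₀ (by fun_prop) (fun x => (hpos x).ne')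
  have hcs2 : HasCompactSupport (fun x => f x ^ 2) := by
    have h : HasCompactSupport (fun x => f x * f x) := hc.mul_left (f := f)
    simpa only [pow_two] using h
  let g : Fin N → Euc N → ℝ := fun i y => y i * (‖y‖ ^ 2 + ε)⁻¹
  have hg : ∀ i, ContDiff ℝ 1 (g i) := fun i => by
    refine ContDiff.mul (by fun_prop) (ContDiff.inv ?_ (fun x => (hpos x).ne'))
    exact (contDiff_norm_sq ℝ).add contDiff_const
  have hF : ContDiff ℝ 1 (fun x => f x ^ 2) := hf1.pow 2
  have hF' : HasCompactSupport (fderiv ℝ (fun x => f x ^ 2)) := hcs2.fderiv ℝ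
  let e : Fin N → Euc N := fun i => EuclideanSpace.single i 1
  have int1 : ∀ i, Integrable (fun x => f x ^ 2 * fderiv ℝ (g i) x (e i)) := fun i => by
    apply Continuous.integrable_of_hasCompactSupport
    · exact hF.continuous.mul (((hg i).continuous_fderiv one_ne_zero).clm_apply continuous_const)
    · exact hcs2.mul_right
  have int2 : ∀ i, Integrable (fun x => fderiv ℝ (fun x => f x ^ 2) x (e i) * g i x) := fun i => by
    apply Continuous.integrable_of_hasCompactSupport
    · exact ((hF.continuous_fderiv one_ne_zero).clm_apply continuous_const).mul (hg i).continuous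
    · exact HasCompactSupport.mul_right (hF'.comp_left (g := fun L : Euc N →L[ℝ] ℝ => L (e i)) (by simp))
  have int3 : ∀ i, Integrable (fun x => f x ^ 2 * g i x) := fun i => by
    apply Continuous.integrable_of_hasCompactSupport
    · exact hF.continuous.mul (hg i).continuous
    · exact hcs2.mul_right
  have ibp : ∀ i, ∫ x, f x ^ 2 * fderiv ℝ (g i) x (e i)
      = - ∫ x, fderiv ℝ (fun x => f x ^ 2) x (e i) * g i x := fun i =>
    integral_mul_fderiv_eq_neg_fderiv_mul_of_integrable (int2 i) (int1 i) (int3 i)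
      (fun x _ => hF.differentiable one_ne_zero x)
      (fun x _ => (hg i).differentiable one_ne_zero x)
  have intA : Integrable (fun x => f x ^ 2 * (‖x‖ ^ 2 + ε)⁻¹) :=
    (hF.continuous.mul hwc).integrable_of_hasCompactSupport hcs2.mul_right
  have intD := integrable_grad_sq f hf hc
  -- pointwise lower bound
  have hsq : ∀ x : Euc N, ∑ i, (x i) ^ 2 = ‖x‖ ^ 2 := fun x => by
    rw [EuclideanSpace.norm_sq_eq]; simp
  have low : ∫ x, ((N : ℝ) - 2) * (f x ^ 2 * (‖x‖ ^ 2 + ε)⁻¹)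
      ≤ ∫ x, ∑ i, f x ^ 2 * fderiv ℝ (g i) x (e i) := by
    refine integral_mono (intA.const_mul _) (integrable_finsetSum _ fun i _ => int1 i) ?_
    intro x
    simp only [g, e]
    simp_rw [hardy_pointwise_div hε x, ← Finset.mul_sum, Finset.sum_sub_distrib]
    simp_rw [← Finset.sum_mul, ← Finset.mul_sum, hsq]
    simp only [Finset.sum_const, Finset.card_univ, Fintype.card_fin, nsmul_eq_mul]
    have hp := hpos x
    set w := (‖x‖ ^ 2 + ε)⁻¹ with hw
    have hw0 : 0 < w := by positivity
    have h1 : ‖x‖ ^ 2 * w ≤ 1 := by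
      rw [hw, ← div_eq_mul_inv, div_le_one hp]; linarith
    have h2 : ‖x‖ ^ 2 * w ^ 2 ≤ w := by nlinarith
    have h3 := sq_nonneg (f x)
    nlinarith [mul_le_mul_of_nonneg_left h2 h3]
  have hd : ∀ x, ∑ i, fderiv ℝ (fun x => f x ^ 2) x (e i) * g i x
      = 2 * f x * (fderiv ℝ f x x) * (‖x‖ ^ 2 + ε)⁻¹ := fun x => by
    have h1 : fderiv ℝ (fun x => f x ^ 2) x = (2 * f x) • fderiv ℝ f x := by
      have := ((hfd x).hasFDerivAt.pow 2).fderiv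
      simpa using this
    have h2 : fderiv ℝ f x x = ∑ i, x i * fderiv ℝ f x (e i) := by
      have h3 := congrArg (fderiv ℝ f x) ((EuclideanSpace.basisFun (Fin N) ℝ).sum_repr x)
      rw [map_sum] at h3
      rw [← h3]
      simp [e]
    rw [h1, h2, Finset.mul_sum, Finset.sum_mul]
    refine Finset.sum_congr rfl fun i _ => ?_
    simp [g]; ring
  have up : - ∫ x, ∑ i, fderiv ℝ (fun x => f x ^ 2) x (e i) * g i x
      ≤ ∫ x, ((((N : ℝ) - 2) / 2) * (f x ^ 2 * (‖x‖ ^ 2 + ε)⁻¹)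
        + (2 / ((N : ℝ) - 2)) * ‖fderiv ℝ f x‖ ^ 2) := by
    rw [← integral_neg]
    refine integral_mono (integrable_finsetSum _ fun i _ => int2 i).neg
      ((intA.const_mul _).add (intD.const_mul _)) ?_
    intro x
    simp only [hd]
    have hp := hpos x
    set w := (‖x‖ ^ 2 + ε)⁻¹ with hw
    have hw0 : 0 < w := by positivity
    have h1 : ‖x‖ ^ 2 * w ≤ 1 := by
      rw [hw, ← div_eq_mul_inv, div_le_one hp]; linarith
    have h2 : (fderiv ℝ f x x) ^ 2 * w ≤ ‖fderiv ℝ f x‖ ^ 2 := by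
      have h3 := (fderiv ℝ f x).le_opNorm x
      have h4 : (fderiv ℝ f x x) ^ 2 ≤ ‖fderiv ℝ f x‖ ^ 2 * ‖x‖ ^ 2 := by
        rw [← mul_pow, ← sq_abs]; exact pow_le_pow_left₀ (abs_nonneg _) h3 2
      nlinarith [sq_nonneg ‖fderiv ℝ f x‖]
    set d := fderiv ℝ f x x
    set a := (N : ℝ) - 2
    have h5 : -(2 * f x * d * w) ≤ a / 2 * (f x ^ 2 * w) + 2 / a * (d ^ 2 * w) := by
      have : a / 2 * (f x ^ 2 * w) + 2 / a * (d ^ 2 * w) + 2 * f x * d * w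
        = w / (2 * a) * (a * f x + 2 * d) ^ 2 := by field_simp; ring
      have : 0 ≤ w / (2 * a) * (a * f x + 2 * d) ^ 2 := by positivity
      linarith
    have h6 : 2 / a * (d ^ 2 * w) ≤ 2 / a * ‖fderiv ℝ f x‖ ^ 2 := by gcongr
    linarith
  rw [integral_finsetSum _ fun i _ => int1 i] at low
  rw [integral_finsetSum _ fun i _ => int2 i] at up
  simp_rw [ibp, Finset.sum_neg_distrib] at low
  have := low.trans up
  rw [integral_add (intA.const_mul _) (intD.const_mul _), integral_const_mul, integral_const_mul,
    integral_const_mul] at this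
  set A := ∫ x, f x ^ 2 * (‖x‖ ^ 2 + ε)⁻¹
  set D := ∫ x, ‖fderiv ℝ f x‖ ^ 2
  set a := (N : ℝ) - 2
  have h7 : a / 2 * A ≤ 2 / a * D := by linarith
  calc A = 2 / a * (a / 2 * A) := by field_simp
    _ ≤ 2 / a * (2 / a * D) := by gcongr
    _ = _ := by ring

lemma hardy_lint {N : ℕ} (hN : 3 ≤ N) (f : Euc N → ℝ)
    (hf : ContDiff ℝ (⊤ : ℕ∞) f) (hc : HasCompactSupport f) :
    ∫⁻ x, ENNReal.ofReal (f x ^ 2 * (‖x‖ ^ 2)⁻¹)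
      ≤ ENNReal.ofReal ((4 / ((N : ℝ) - 2) ^ 2) * ∫ x, ‖fderiv ℝ f x‖ ^ 2) := by
  have hfc : Continuous f := hf.continuous
  have hep : ∀ n : ℕ, (0 : ℝ) < 1 / ((n : ℝ) + 1) := fun n => by positivity
  have hcs2 : HasCompactSupport (fun x => f x ^ 2) := by
    have h : HasCompactSupport (fun x => f x * f x) := hc.mul_left (f := f)
    simpa only [pow_two] using h
  have hcont : ∀ n : ℕ, Continuous (fun x : Euc N => f x ^ 2 * (‖x‖ ^ 2 + 1 / ((n : ℝ) + 1))⁻¹) :=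
    fun n => (hfc.pow 2).mul (Continuous.inv₀ (by fun_prop) (fun x => by positivity))
  have hb : ∀ n : ℕ, ∫⁻ x, ENNReal.ofReal (f x ^ 2 * (‖x‖ ^ 2 + 1 / ((n : ℝ) + 1))⁻¹)
      ≤ ENNReal.ofReal ((4 / ((N : ℝ) - 2) ^ 2) * ∫ x, ‖fderiv ℝ f x‖ ^ 2) := fun n => by
    rw [← ofReal_integral_eq_lintegral_ofReal]
    · exact ENNReal.ofReal_le_ofReal (hardy_eps hN (hep n) f hf hc)
    · exact (hcont n).integrable_of_hasCompactSupport hcs2.mul_right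
    · exact Eventually.of_forall fun x => by simp only [Pi.zero_apply]; positivity
  calc _ ≤ ∫⁻ x, liminf (fun n : ℕ =>
          ENNReal.ofReal (f x ^ 2 * (‖x‖ ^ 2 + 1 / ((n : ℝ) + 1))⁻¹)) atTop := by
        refine lintegral_mono fun x => ?_
        by_cases hx : x = 0
        · simp [hx]
        · have hx' : ‖x‖ ^ 2 + 0 ≠ 0 := by
            have := norm_pos_iff.2 hx
            positivity
          have h1 := (((tendsto_one_div_add_atTop_nhds_zero_nat (𝕜 := ℝ)).const_add
            (‖x‖ ^ 2)).inv₀ hx').const_mul (f x ^ 2)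
          have h2 := ENNReal.tendsto_ofReal h1
          rw [h2.liminf_eq, add_zero]
    _ ≤ liminf (fun n : ℕ => ∫⁻ x,
          ENNReal.ofReal (f x ^ 2 * (‖x‖ ^ 2 + 1 / ((n : ℝ) + 1))⁻¹)) atTop :=
        lintegral_liminf_le fun n => (hcont n).measurable.ennreal_ofReal
    _ ≤ liminf (fun n : ℕ => ENNReal.ofReal ((4 / ((N : ℝ) - 2) ^ 2) *
          ∫ x, ‖fderiv ℝ f x‖ ^ 2)) atTop :=
        liminf_le_liminf (Eventually.of_forall hb)
    _ = _ := by simp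

lemma sobolev_lint {N : ℕ} (hN : 3 ≤ N) : ∃ C : ℝ, 0 < C ∧ ∀ f : Euc N → ℝ,
    ContDiff ℝ (⊤ : ℕ∞) f → HasCompactSupport f →
    ∫⁻ x, ENNReal.ofReal (|f x| ^ (2 * (N : ℝ) / ((N : ℝ) - 2)))
      ≤ ENNReal.ofReal (C * (∫ x, ‖fderiv ℝ f x‖ ^ 2) ^ ((N : ℝ) / ((N : ℝ) - 2))) := by
  have hN3 : (3 : ℝ) ≤ N := by exact_mod_cast hN
  have hN' : (0 : ℝ) < (N : ℝ) - 2 := by linarith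
  have hq0 : 0 < 2 * (N : ℝ) / ((N : ℝ) - 2) := by positivity
  let p' : NNReal := ⟨2 * (N : ℝ) / ((N : ℝ) - 2), hq0.le⟩
  have hp'c : (p' : ℝ) = 2 * (N : ℝ) / ((N : ℝ) - 2) := rfl
  have hp'0 : p' ≠ 0 := by
    intro h
    have h' : (p' : ℝ) = 0 := by simp [h]
    exact hq0.ne' (hp'c.symm.trans h')
  let C0 : NNReal := SNormLESNormFDerivOfEqConst ℝ (volume : Measure (Euc N)) (2 : NNReal)
  refine ⟨((C0 : ℝ) + 1) ^ (p' : ℝ), by positivity, fun f hf hc => ?_⟩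
  have hf1 : ContDiff ℝ 1 f := hf.of_le (by exact_mod_cast le_top)
  have key := eLpNorm_le_eLpNorm_fderiv_of_eq (volume : Measure (Euc N)) hf1 hc (p := 2) (p' := p')
    (by norm_num) (by simp; omega) (by
      rw [hp'c]; simp; field_simp)
  change eLpNorm f p' volume ≤ C0 * _ at key
  have intD := integrable_grad_sq f hf hc
  set D := ∫ x, ‖fderiv ℝ f x‖ ^ 2 with hD
  have hD0 : 0 ≤ D := integral_nonneg fun x => by positivity
  have h2 : eLpNorm (fderiv ℝ f) ((2 : NNReal) : ℝ≥0∞) volume = ENNReal.ofReal (D ^ (1 / 2 : ℝ)) := by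
    rw [eLpNorm_nnreal_eq_lintegral two_ne_zero, ← ENNReal.ofReal_rpow_of_nonneg hD0 (by norm_num),
      hD, ofReal_integral_eq_lintegral_ofReal intD (Eventually.of_forall fun x => by
        simp only [Pi.zero_apply]; positivity)]
    congr 1
    refine lintegral_congr fun x => ?_
    rw [← ofReal_norm, ENNReal.ofReal_rpow_of_nonneg (norm_nonneg _) (by positivity)]
    norm_num
  rw [h2, eLpNorm_nnreal_eq_lintegral hp'0] at key
  have h3 := ENNReal.rpow_le_rpow key (z := (p' : ℝ)) p'.coe_nonneg
  rw [← ENNReal.rpow_mul, one_div_mul_cancel (by rw [hp'c]; exact hq0.ne'), ENNReal.rpow_one] at h3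
  calc ∫⁻ x, ENNReal.ofReal (|f x| ^ (2 * (N : ℝ) / ((N : ℝ) - 2)))
      = ∫⁻ x, ‖f x‖ₑ ^ (p' : ℝ) := by
        refine lintegral_congr fun x => ?_
        rw [← ofReal_norm, ENNReal.ofReal_rpow_of_nonneg (norm_nonneg _) p'.coe_nonneg]
        rfl
    _ ≤ _ := h3
    _ ≤ (ENNReal.ofReal (((C0 : ℝ) + 1) * D ^ (1 / 2 : ℝ))) ^ (p' : ℝ) := by
        refine ENNReal.rpow_le_rpow ?_ p'.coe_nonneg
        rw [ENNReal.ofReal_mul (by positivity)]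
        gcongr
        rw [← ENNReal.ofReal_coe_nnreal]
        exact ENNReal.ofReal_le_ofReal (by linarith)
    _ = _ := by
        rw [ENNReal.ofReal_rpow_of_nonneg (by positivity) p'.coe_nonneg,
          Real.mul_rpow (by positivity) (by positivity), ← Real.rpow_mul hD0]
        congr 3
        rw [hp'c]; field_simp

open MeasureTheory Metric Filter Set ENNReal in
/-- **Weighted Sobolev inequality** (inequality (3.10) of Muratori–Petitt): for `γ ∈ [0,2)`
and any weight `0 ≤ ρ(x) ≤ K|x|^{-γ}`, there is `C_S > 0` depending only on `N, γ, K` with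
`(∫ |f|^{2(N-γ)/(N-2)} ρ dx)^{(N-2)/(N-γ)} ≤ C_S ∫ |∇f|² dx` for all `f ∈ C_c^∞(ℝᴺ)`. -/
theorem weighted_sobolev_inequality
    (N : ℕ) (hN : 3 ≤ N) (γ K : ℝ)
    (hγ0 : 0 ≤ γ) (hγ2 : γ < 2) (hK : 0 < K) :
    ∃ C_S : ℝ, 0 < C_S ∧
      ∀ ρ : Euc N → ℝ, Measurable ρ →
        (∀ᵐ x : Euc N ∂volume, 0 ≤ ρ x ∧ ρ x ≤ K * ‖x‖ ^ (-γ)) →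
      ∀ f : Euc N → ℝ, ContDiff ℝ (⊤ : ℕ∞) f → HasCompactSupport f →
        (∫ x : Euc N, |f x| ^ (2 * ((N : ℝ) - γ) / ((N : ℝ) - 2)) * ρ x) ^
            (((N : ℝ) - 2) / ((N : ℝ) - γ)) ≤
          C_S * ∫ x : Euc N, ‖fderiv ℝ f x‖ ^ 2 := by
  have hN3 : (3 : ℝ) ≤ N := by exact_mod_cast hN
  have hN' : (0 : ℝ) < (N : ℝ) - 2 := by linarith
  have hNγ : (0 : ℝ) < (N : ℝ) - γ := by linarith
  obtain ⟨C, hC, hS⟩ := sobolev_lint hN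
  set c := 4 / ((N : ℝ) - 2) ^ 2 with hc_def
  have hc0 : 0 < c := by positivity
  have ha : 0 ≤ γ / 2 := by positivity
  have hb : 0 ≤ 1 - γ / 2 := by linarith
  set M := K * (c ^ (γ / 2) * C ^ (1 - γ / 2)) with hM
  have hM0 : 0 < M := by positivity
  refine ⟨M ^ (((N : ℝ) - 2) / ((N : ℝ) - γ)), by positivity, fun ρ hρm hρ f hf hc => ?_⟩
  have hH := hardy_lint hN f hf hc
  have hS' := hS f hf hc
  rw [← hc_def] at hH
  set D := ∫ x, ‖fderiv ℝ f x‖ ^ 2 with hD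
  have hD0 : 0 ≤ D := integral_nonneg fun x => by positivity
  have hfc : Continuous f := hf.continuous
  have hI : ∫ x : Euc N, |f x| ^ (2 * ((N : ℝ) - γ) / ((N : ℝ) - 2)) * ρ x
      ≤ M * D ^ (((N : ℝ) - γ) / ((N : ℝ) - 2)) := by
    rw [integral_eq_lintegral_of_nonneg_ae]
    rotate_left
    · filter_upwards [hρ] with x hx
      exact mul_nonneg (by positivity) hx.1
    · exact ((hfc.measurable.abs.pow_const _).mul hρm).aestronglyMeasurable
    refine ENNReal.toReal_le_of_le_ofReal (by positivity) ?_
    calc _ ≤ ∫⁻ x, ENNReal.ofReal K * ((ENNReal.ofReal (f x ^ 2 * (‖x‖ ^ 2)⁻¹)) ^ (γ / 2) *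
            (ENNReal.ofReal (|f x| ^ (2 * (N : ℝ) / ((N : ℝ) - 2)))) ^ (1 - γ / 2)) := by
          refine lintegral_mono_ae ?_
          filter_upwards [hρ] with x hx
          rw [ENNReal.ofReal_rpow_of_nonneg (by positivity) ha,
            ENNReal.ofReal_rpow_of_nonneg (by positivity) hb,
            ← ENNReal.ofReal_mul (by positivity), ← ENNReal.ofReal_mul hK.le]
          refine ENNReal.ofReal_le_ofReal ?_
          have e1 : (f x ^ 2 * (‖x‖ ^ 2)⁻¹) ^ (γ / 2) = |f x| ^ γ * ‖x‖ ^ (-γ) := by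
            rw [Real.mul_rpow (by positivity) (by positivity), ← sq_abs,
              Real.inv_rpow (by positivity), ← Real.rpow_natCast, ← Real.rpow_natCast,
              ← Real.rpow_mul (by positivity), ← Real.rpow_mul (by positivity),
              Real.rpow_neg (by positivity)]
            congr 3 <;> push_cast <;> ring
          have e2 : |f x| ^ (2 * ((N : ℝ) - γ) / ((N : ℝ) - 2)) = |f x| ^ γ *
              (|f x| ^ (2 * (N : ℝ) / ((N : ℝ) - 2))) ^ (1 - γ / 2) := by
            rw [← Real.rpow_mul (by positivity), ← Real.rpow_add_of_nonneg (by positivity) hγ0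
              (by positivity)]
            congr 1
            field_simp
            ring
          rw [e1, e2]
          set P := |f x| ^ γ
          set Q := (|f x| ^ (2 * (N : ℝ) / ((N : ℝ) - 2))) ^ (1 - γ / 2)
          have hP : 0 ≤ P := by positivity
          have hQ : 0 ≤ Q := by positivity
          calc P * Q * ρ x ≤ P * Q * (K * ‖x‖ ^ (-γ)) := by
                gcongr; exact hx.2
            _ = _ := by ring
      _ = ENNReal.ofReal K * ∫⁻ x, ((ENNReal.ofReal (f x ^ 2 * (‖x‖ ^ 2)⁻¹)) ^ (γ / 2) *
            (ENNReal.ofReal (|f x| ^ (2 * (N : ℝ) / ((N : ℝ) - 2)))) ^ (1 - γ / 2)) :=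
          lintegral_const_mul' _ _ ENNReal.ofReal_ne_top
      _ ≤ ENNReal.ofReal K * ((∫⁻ x, ENNReal.ofReal (f x ^ 2 * (‖x‖ ^ 2)⁻¹)) ^ (γ / 2) *
            (∫⁻ x, ENNReal.ofReal (|f x| ^ (2 * (N : ℝ) / ((N : ℝ) - 2)))) ^ (1 - γ / 2)) := by
          gcongr
          refine ENNReal.lintegral_mul_norm_pow_le ?_ ?_ ha hb (by ring)
          · exact ((hfc.measurable.pow_const 2).mul
              ((measurable_norm.pow_const 2).inv)).ennreal_ofReal.aemeasurable
          · exact (hfc.measurable.abs.pow_const _).ennreal_ofReal.aemeasurable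
      _ ≤ ENNReal.ofReal K * ((ENNReal.ofReal (c * D)) ^ (γ / 2) *
            (ENNReal.ofReal (C * D ^ ((N : ℝ) / ((N : ℝ) - 2)))) ^ (1 - γ / 2)) := by
          gcongr
      _ = _ := by
          rw [ENNReal.ofReal_rpow_of_nonneg (by positivity) ha,
            ENNReal.ofReal_rpow_of_nonneg (by positivity) hb,
            ← ENNReal.ofReal_mul (by positivity), ← ENNReal.ofReal_mul hK.le]
          congr 1
          rw [Real.mul_rpow hc0.le hD0, Real.mul_rpow hC.le (by positivity),
            ← Real.rpow_mul hD0]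
          have e3 : D ^ (((N : ℝ) - γ) / ((N : ℝ) - 2)) = D ^ (γ / 2) *
              D ^ ((N : ℝ) / ((N : ℝ) - 2) * (1 - γ / 2)) := by
            rw [← Real.rpow_add_of_nonneg hD0 ha (by positivity)]
            congr 1
            field_simp
            ring
          rw [e3, hM]
          ring
  have hI0 : 0 ≤ ∫ x : Euc N, |f x| ^ (2 * ((N : ℝ) - γ) / ((N : ℝ) - 2)) * ρ x := by
    refine integral_nonneg_of_ae ?_
    filter_upwards [hρ] with x hx
    exact mul_nonneg (by positivity) hx.1
  calc _ ≤ (M * D ^ (((N : ℝ) - γ) / ((N : ℝ) - 2))) ^ (((N : ℝ) - 2) / ((N : ℝ) - γ)) :=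
        Real.rpow_le_rpow hI0 hI (by positivity)
    _ = _ := by
        rw [Real.mul_rpow hM0.le (by positivity), ← Real.rpow_mul hD0]
        have : ((N : ℝ) - γ) / ((N : ℝ) - 2) * (((N : ℝ) - 2) / ((N : ℝ) - γ)) = 1 := by
          field_simp
        rw [this, Real.rpow_one]
end
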